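/- arXiv:1909.03180 — 5 statements merged into one kernel-verified Lean document; each statement's English description precedes it below -/
import Mathlib

section
/- Let q be a prime power, n ≥ 1, r ≥ 0 an integer, and f: F_q^n → Z a function such that for every direction γ (nonzero vector up to scaling) there exists a line E_γ in direction γ with Σ_{x ∈ E_γ} |f(x)| ≥ r. Then Σ_{x ∈ F_q^n} |f(x)|^n ≥ r^n / (2 − q^{-1})^n. -/
namespace KakeyaNorm

open MvPolynomial

/-- Exponents of degree less than `D`. -/
noncomputable def expo (n D : ℕ) : Finset (Fin n →₀ ℕ) :=
  (Finset.range D).biUnion (fun k => Finset.finsuppAntidiag Finset.univ k)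

lemma mem_expo {n D : ℕ} {e : Fin n →₀ ℕ} : e ∈ expo n D ↔ e.degree < D := by
  simp [expo, Finset.mem_finsuppAntidiag, Finsupp.degree_eq_sum]

lemma card_expo {n D : ℕ} (hn : 1 ≤ n) :
    n.factorial * (expo n D).card = ∏ j ∈ Finset.range n, (D + j) := by
  rw [expo, Finset.card_biUnion]
  · simp only [Finset.card_finsuppAntidiag_nat_eq_multichoose, Finset.card_univ, Fintype.card_fin]
    cases D with
    | zero =>
      simp
      rw [eq_comm, Finset.prod_eq_zero_iff]
      exact ⟨0, Finset.mem_range.2 hn, rfl⟩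
    | succ D =>
      rw [Nat.sum_range_multichoose, ← Nat.ascFactorial_eq_factorial_mul_choose,
        Nat.ascFactorial_eq_prod_range]
  · intro x _ y _ hxy
    refine Finset.disjoint_left.2 ?_
    intro e he he'
    simp [Finset.mem_finsuppAntidiag] at he he'
    exact hxy (he.symm.trans he')

variable {F : Type*} [Field F] {n : ℕ}

/-- Translation. -/
noncomputable def tr (a : Fin n → F) : MvPolynomial (Fin n) F →ₐ[F] MvPolynomial (Fin n) F :=
  aeval (fun i => C (a i) + X i)

/-- Existence by counting. -/
lemma exists_poly (D : ℕ) [Fintype F] (M : (Fin n → F) → ℕ)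
    (h : ∑ x, (expo n (M x)).card < (expo n D).card) :
    ∃ P : MvPolynomial (Fin n) F, P ≠ 0 ∧ P.totalDegree < D ∧
      ∀ x i, i.degree < M x → coeff i (tr x P) = 0 := by
  classical
    let A : ((expo n D) → F) →ₗ[F] MvPolynomial (Fin n) F :=
    { toFun := fun v => ∑ e : expo n D, monomial e.1 (v e)
      map_add' := by intro v w; simp [Finset.sum_add_distrib]
      map_smul' := by intro c v; simp [Finset.smul_sum, smul_monomial] }
  have hA : ∀ v (e : expo n D), coeff e.1 (A v) = v e := by
    intro v e
    simp [A, coeff_sum, coeff_monomial]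
  have hA' : ∀ v e, e ∉ expo n D → coeff e (A v) = 0 := by
    intro v e he
    change coeff e (∑ e : expo n D, monomial e.1 (v e)) = 0
    simp only [coeff_sum, coeff_monomial]
    apply Finset.sum_eq_zero
    intro x _
    rw [if_neg]
    rintro rfl
    exact he x.2
  let B : MvPolynomial (Fin n) F →ₗ[F] ((Σ x : Fin n → F, (expo n (M x))) → F) :=
    LinearMap.pi (fun s => (lcoeff F s.2.1).comp (tr s.1).toLinearMap)
  have hk : LinearMap.ker (B.comp A) ≠ ⊥ := by
    apply LinearMap.ker_ne_bot_of_finrank_lt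
    simp only [Module.finrank_fintype_fun_eq_card, Fintype.card_sigma, Fintype.card_coe]
    exact h
  obtain ⟨v, hv, hv0⟩ := (Submodule.ne_bot_iff _).1 hk
  have hne : A v ≠ 0 := by
    intro h0
    apply hv0
    funext e
    rw [← hA v e, h0]; simp
  refine ⟨A v, hne, ?_, ?_⟩
  · have hD : 0 < D := by
      by_contra hD
      have : D = 0 := by omega
      subst this
      simp [expo] at h
    rw [MvPolynomial.totalDegree, Finset.sup_lt_iff (by simpa using hD)]
    intro e he
    by_contra hc
    rw [mem_support_iff] at he
    apply he
    apply hA'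
    rw [mem_expo]
    exact hc
  · intro x i hi
    have := congrFun (LinearMap.mem_ker.1 hv) ⟨x, ⟨i, mem_expo.2 hi⟩⟩
    simpa [B] using this

/-- the generic line substitution -/
noncomputable def gl (a b : Fin n → F) :
    MvPolynomial (Fin n) F →ₐ[F] MvPolynomial (Fin n) (Polynomial F) :=
  aeval (fun i => C (Polynomial.C (a i)) + C Polynomial.X * (C (Polynomial.C (b i)) + X i))

/-- degree bounded with top part -/
def R (d : ℕ) (G : MvPolynomial (Fin n) (Polynomial F)) (H : MvPolynomial (Fin n) F) : Prop :=
  ∀ i, (coeff i G).natDegree ≤ d ∧ (coeff i G).coeff d = coeff i H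

lemma R.mul {d d' : ℕ} {G G' : MvPolynomial (Fin n) (Polynomial F)} {H H' : MvPolynomial (Fin n) F}
    (h : R d G H) (h' : R d' G' H') : R (d + d') (G * G') (H * H') := by
  classical
  intro i
  rw [coeff_mul, coeff_mul]
  refine ⟨Polynomial.natDegree_sum_le_of_forall_le _ _ fun x _ =>
    Polynomial.natDegree_mul_le_of_le (h x.1).1 (h' x.2).1, ?_⟩
  rw [Polynomial.finsetSum_coeff]
  refine Finset.sum_congr rfl fun x _ => ?_
  rw [Polynomial.coeff_mul_add_eq_of_natDegree_le (h x.1).1 (h' x.2).1, (h x.1).2, (h' x.2).2]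

lemma R.sum {ι : Type*} (s : Finset ι) {d : ℕ} {G : ι → MvPolynomial (Fin n) (Polynomial F)}
    {H : ι → MvPolynomial (Fin n) F} (h : ∀ j ∈ s, R d (G j) (H j)) :
    R d (∑ j ∈ s, G j) (∑ j ∈ s, H j) := by
  intro i
  rw [coeff_sum, coeff_sum]
  refine ⟨Polynomial.natDegree_sum_le_of_forall_le _ _ fun x hx => (h x hx i).1, ?_⟩
  rw [Polynomial.finsetSum_coeff]
  exact Finset.sum_congr rfl fun x hx => (h x hx i).2

lemma R.C (c : F) : R (n := n) 0 (C (Polynomial.C c)) (C c) := by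
  classical
  intro i
  rw [coeff_C, coeff_C]
  split_ifs <;> simp

lemma R.pow {d : ℕ} {G : MvPolynomial (Fin n) (Polynomial F)} {H : MvPolynomial (Fin n) F}
    (h : R d G H) (k : ℕ) : R (k * d) (G ^ k) (H ^ k) := by
  induction k with
  | zero => simpa using R.C (n := n) (1 : F)
  | succ k ih => rw [pow_succ, pow_succ, Nat.succ_mul]; exact ih.mul h

lemma R.prod {ι : Type*} (s : Finset ι) {d : ι → ℕ} {G : ι → MvPolynomial (Fin n) (Polynomial F)}
    {H : ι → MvPolynomial (Fin n) F} (h : ∀ j ∈ s, R (d j) (G j) (H j)) :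
    R (∑ j ∈ s, d j) (∏ j ∈ s, G j) (∏ j ∈ s, H j) := by
  classical
  induction s using Finset.induction_on with
  | empty => simpa using R.C (n := n) (1 : F)
  | insert j s hj ih =>
    rw [Finset.sum_insert hj, Finset.prod_insert hj, Finset.prod_insert hj]
    exact (h j (by simp)).mul (ih fun k hk => h k (by simp [hk]))

lemma R.lt {d d' : ℕ} {G : MvPolynomial (Fin n) (Polynomial F)} {H : MvPolynomial (Fin n) F}
    (h : R d G H) (hd : d < d') : R d' G 0 := by
  intro i
  refine ⟨(h i).1.trans hd.le, ?_⟩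
  rw [Polynomial.coeff_eq_zero_of_natDegree_lt ((h i).1.trans_lt hd)]; simp

lemma R.base (a b : F) (j : Fin n) :
    R 1 (MvPolynomial.C (Polynomial.C a) + MvPolynomial.C Polynomial.X *
      (MvPolynomial.C (Polynomial.C b) + X j)) (MvPolynomial.C b + X j) := by
  classical
  intro i
  simp only [coeff_add, coeff_C_mul, coeff_C, coeff_X]
  constructor
  · split_ifs <;> compute_degree
  · split_ifs <;> simp [Polynomial.coeff_C]

lemma R.monomial (a b : Fin n → F) (e : Fin n →₀ ℕ) (c : F) :
    R e.degree (gl a b (monomial e c)) (tr b (monomial e c)) := by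
  rw [gl, tr, aeval_monomial, aeval_monomial, Finsupp.degree_eq_sum]
  rw [Finsupp.prod_fintype _ _ (by simp), Finsupp.prod_fintype _ _ (by simp)]
  have h1 := R.prod Finset.univ (fun j _ => (R.base (a j) (b j) j).pow (e j))
  have h2 := (R.C (n := n) c).mul h1
  simpa using h2

lemma R.main (a b : Fin n → F) (P : MvPolynomial (Fin n) F) :
    R P.totalDegree (gl a b P) (tr b (homogeneousComponent P.totalDegree P)) := by
  classical
  have h := R.sum P.support (d := P.totalDegree)
    (G := fun e => gl a b (MvPolynomial.monomial e (coeff e P)))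
    (H := fun e => if e.degree = P.totalDegree then tr b (MvPolynomial.monomial e (coeff e P)) else 0)
    (by
      intro e he
      have h1 := R.monomial a b e (coeff e P)
      split_ifs with h
      · rwa [h] at h1
      · exact h1.lt (lt_of_le_of_ne (le_totalDegree he) h))
  rw [← map_sum, ← MvPolynomial.as_sum, ← Finset.sum_filter, ← map_sum,
    ← homogeneousComponent_apply] at h
  exact h

/-- order of vanishing along the generic line -/
def O (t : F) (k : ℕ) (G : MvPolynomial (Fin n) (Polynomial F)) : Prop :=
  ∀ i, (Polynomial.X - Polynomial.C t) ^ (k - i.degree) ∣ coeff i G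

lemma O.mul {t : F} {k k' : ℕ} {G G' : MvPolynomial (Fin n) (Polynomial F)}
    (h : O t k G) (h' : O t k' G') : O t (k + k') (G * G') := by
  classical
  intro i
  rw [coeff_mul]
  refine Finset.dvd_sum fun x hx => ?_
  rw [Finset.HasAntidiagonal.mem_antidiagonal] at hx
  refine dvd_trans (pow_dvd_pow _ ?_) (pow_add (Polynomial.X - Polynomial.C t) _ _ ▸
    mul_dvd_mul (h x.1) (h' x.2))
  rw [← hx, map_add]
  omega

lemma O.zero (t : F) (G : MvPolynomial (Fin n) (Polynomial F)) : O t 0 G := by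
  intro i; simp

lemma O.pow {t : F} {d : ℕ} {G : MvPolynomial (Fin n) (Polynomial F)}
    (h : O t d G) (k : ℕ) : O t (k * d) (G ^ k) := by
  induction k with
  | zero => simpa using O.zero t _
  | succ k ih => rw [pow_succ, Nat.succ_mul]; exact ih.mul h

lemma O.prod {t : F} {ι : Type*} (s : Finset ι) {d : ι → ℕ}
    {G : ι → MvPolynomial (Fin n) (Polynomial F)} (h : ∀ j ∈ s, O t (d j) (G j)) :
    O t (∑ j ∈ s, d j) (∏ j ∈ s, G j) := by
  classical
  induction s using Finset.induction_on with
  | empty => simpa using O.zero t _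
  | insert j s hj ih =>
    rw [Finset.sum_insert hj, Finset.prod_insert hj]
    exact (h j (by simp)).mul (ih fun k hk => h k (by simp [hk]))

lemma O.base (t b : F) (j : Fin n) :
    O t 1 (C (Polynomial.C t) * X j + C (Polynomial.X - Polynomial.C t) *
      (C (Polynomial.C b) + X j)) := by
  classical
  intro i
  rcases Nat.eq_zero_or_pos i.degree with h | h
  · have : i = 0 := (Finsupp.degree_eq_zero_iff i).1 h
    subst this
    rw [coeff_add, coeff_C_mul, coeff_C_mul]
    simp
  · have : 1 - i.degree = 0 := by omega
    rw [this]; simp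

lemma gl_eq (a b : Fin n → F) (t : F) (P : MvPolynomial (Fin n) F) :
    gl a b P = aeval (fun j => C (Polynomial.C t) * X j + C (Polynomial.X - Polynomial.C t) *
      (C (Polynomial.C (b j)) + X j) : Fin n → MvPolynomial (Fin n) (Polynomial F))
      (tr (a + t • b) P) := by
  have : gl a b = (aeval (fun j => C (Polynomial.C t) * X j + C (Polynomial.X - Polynomial.C t) *
      (C (Polynomial.C (b j)) + X j) : Fin n → MvPolynomial (Fin n) (Polynomial F))).comp
      (tr (a + t • b)) := by
    apply MvPolynomial.algHom_ext
    intro j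
    simp [gl, tr, algHom_C, MvPolynomial.algebraMap_apply]
    ring
  rw [this]; rfl

lemma O.main (a b : Fin n → F) (t : F) (P : MvPolynomial (Fin n) F) (M : ℕ)
    (hM : ∀ i, i.degree < M → coeff i (tr (a + t • b) P) = 0) : O t M (gl a b P) := by
  rw [gl_eq a b t]
  set Q := tr (a + t • b) P
  intro i
  rw [aeval_def, eval₂_eq', coeff_sum]
  refine Finset.dvd_sum fun e he => ?_
  have hd : M ≤ e.degree := by
    by_contra hc
    exact (mem_support_iff.1 he) (hM e (by omega))
  have h1 := O.prod Finset.univ (fun j _ => (O.base t (b j) j).pow (e j))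
  have h2 := (O.zero t (algebraMap F (MvPolynomial (Fin n) (Polynomial F)) (coeff e Q))).mul h1 i
  refine dvd_trans (pow_dvd_pow _ ?_) h2
  rw [Finsupp.degree_eq_sum] at hd
  simp
  omega

lemma zero_main (a b : Fin n → F) (P : MvPolynomial (Fin n) F) (M : ℕ)
    (hM : ∀ i, i.degree < M → coeff i (tr a P) = 0) (i : Fin n →₀ ℕ) :
    Polynomial.X ^ M ∣ coeff i (gl a b P) := by
  rw [gl_eq a b 0]
  simp only [zero_smul, add_zero, map_zero, zero_mul, zero_add, sub_zero]
  set Q := tr a P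
  rw [aeval_def, eval₂_eq', coeff_sum]
  refine Finset.dvd_sum fun e he => ?_
  have hd : M ≤ e.degree := by
    by_contra hc
    exact (mem_support_iff.1 he) (hM e (by omega))
  simp only [mul_pow, Finset.prod_mul_distrib, Finset.prod_pow_eq_pow_sum]
  rw [← Finsupp.degree_eq_sum, mul_left_comm, ← C_pow, coeff_C_mul]
  exact (pow_dvd_pow _ hd).mul_right _

end KakeyaNorm
namespace KakeyaNorm

open MvPolynomial

variable {F : Type*} [Field F] {n : ℕ}

lemma constantCoeff_tr (a : Fin n → F) (P : MvPolynomial (Fin n) F) :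
    constantCoeff (tr a P) = eval a P := by
  have : (constantCoeff (R := F) (σ := Fin n)).comp (tr a).toRingHom = eval a := by
    apply MvPolynomial.ringHom_ext
    · intro r; simp [tr]
    · intro i; simp [tr]
  rw [← this]; rfl

lemma totalDegree_tr (a : Fin n → F) (P : MvPolynomial (Fin n) F) :
    (tr a P).totalDegree ≤ P.totalDegree := by
  rw [tr, aeval_def, eval₂_eq']
  refine totalDegree_finsetSum_le fun e he => ?_
  have h1 : (∏ i, (C (a i) + X i : MvPolynomial (Fin n) F) ^ e i).totalDegree ≤ ∑ i, e i := by
    refine (totalDegree_finsetProd _ _).trans (Finset.sum_le_sum fun i _ => ?_)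
    refine (totalDegree_pow _ _).trans ?_
    have : (C (a i) + X i : MvPolynomial (Fin n) F).totalDegree ≤ 1 :=
      (totalDegree_add _ _).trans (by simp)
    nlinarith
  refine (totalDegree_mul _ _).trans ?_
  rw [MvPolynomial.algebraMap_eq, totalDegree_C, zero_add]
  refine h1.trans ?_
  rw [← Finsupp.degree_eq_sum]
  exact le_totalDegree he

lemma tr_inj (a : Fin n → F) (P : MvPolynomial (Fin n) F) (h : tr a P = 0) : P = 0 := by
  have : (tr (-a)).comp (tr a) = AlgHom.id F (MvPolynomial (Fin n) F) := by
    apply MvPolynomial.algHom_ext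
    intro j
    simp [tr, algHom_C]
  have h1 := DFunLike.congr_fun this P
  simpa [h] using h1.symm

variable [Fintype F]

/-- the univariate vanishing polynomial -/
noncomputable def gg (i : Fin n) : MvPolynomial (Fin n) F := ∏ s : F, (X i - C s)

lemma tr_gg (a : Fin n → F) (i : Fin n) :
    ∃ u : MvPolynomial (Fin n) F, tr a (gg i) = X i * u ∧ constantCoeff u ≠ 0 := by
  classical
  refine ⟨∏ s ∈ Finset.univ.erase (a i), (C (a i) + X i - C s), ?_, ?_⟩
  · rw [gg, map_prod, ← Finset.mul_prod_erase _ _ (Finset.mem_univ (a i))]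
    simp [tr]
  · rw [map_prod, Finset.prod_ne_zero_iff]
    intro s hs
    have := (Finset.mem_erase.1 hs).1
    simp [sub_eq_zero, this.symm]

lemma totalDegree_gg (i : Fin n) : (gg i : MvPolynomial (Fin n) F).totalDegree = Fintype.card F ∧
    (gg i : MvPolynomial (Fin n) F) ≠ 0 := by
  have h0 : ∀ s : F, (X i - C s : MvPolynomial (Fin n) F) ≠ 0 := by
    intro s h
    have h1 := congrArg (eval (fun _ => s + 1)) h
    simp at h1
  constructor
  · have : ∀ s : F, (X i - C s : MvPolynomial (Fin n) F).totalDegree = 1 := by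
      intro s
      rw [sub_eq_add_neg, ← C_neg, totalDegree_add_eq_left_of_totalDegree_lt] <;> simp
    have h2 : ∀ S : Finset F, (∏ s ∈ S, (X i - C s : MvPolynomial (Fin n) F)).totalDegree
        = S.card := by
      classical
      intro S
      induction S using Finset.induction_on with
      | empty => simp
      | insert s S hs ih =>
        rw [Finset.prod_insert hs, totalDegree_mul_of_isDomain (h0 s)
          (Finset.prod_ne_zero_iff.2 fun s _ => h0 s), ih, this, Finset.card_insert_of_notMem hs,
          add_comm]
    exact h2 _
  · rw [gg, Finset.prod_ne_zero_iff]
    exact fun s _ => h0 s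

lemma vanish_of_rep (l s : ℕ) (hs : s < l) (P : MvPolynomial (Fin n) F)
    (hP : ∀ a i, i.degree < l → coeff i (tr a P) = 0)
    (h : (Fin n →₀ ℕ) → MvPolynomial (Fin n) F)
    (hrep : P = ∑ τ ∈ Finset.finsuppAntidiag Finset.univ s, h τ * ∏ i, gg i ^ τ i)
    (σ : Fin n →₀ ℕ) (hσ : σ.degree = s) (a : Fin n → F) : eval a (h σ) = 0 := by
  classical
  choose u hu hu0 using tr_gg (F := F) (n := n) a
  have h1 := hP a σ (by omega)
  have hmon : ∀ τ : Fin n →₀ ℕ, (∏ i, (X i : MvPolynomial (Fin n) F) ^ τ i) = monomial τ 1 := by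
    intro τ
    rw [monomial_eq, Finsupp.prod_fintype _ _ (by simp)]; simp
  rw [hrep, map_sum, coeff_sum, Finset.sum_eq_single σ] at h1
  · simp only [map_mul, map_prod, map_pow, hu, mul_pow, Finset.prod_mul_distrib, hmon] at h1
    rw [mul_left_comm, coeff_monomial_mul', if_pos le_rfl, tsub_self, one_mul,
      ← constantCoeff_eq, map_mul, constantCoeff_tr] at h1
    refine (mul_eq_zero.1 h1).resolve_right ?_
    rw [map_prod]
    refine Finset.prod_ne_zero_iff.2 ?_
    intro i _
    rw [map_pow]
    exact pow_ne_zero _ (hu0 i)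
  · intro τ hτ hne
    simp only [map_mul, map_prod, map_pow, hu, mul_pow, Finset.prod_mul_distrib, hmon]
    rw [mul_left_comm, coeff_monomial_mul', if_neg]
    intro hle
    apply hne
    obtain ⟨ρ, rfl⟩ := exists_add_of_le hle
    have hτ' : τ.degree = s := by
      rw [Finsupp.degree_eq_sum]; exact (Finset.mem_finsuppAntidiag.1 hτ).1
    rw [map_add] at hσ
    have : ρ = 0 := (Finsupp.degree_eq_zero_iff ρ).1 (by omega)
    simp [this]
  · intro hc
    exfalso; apply hc
    rw [Finset.mem_finsuppAntidiag, ← Finsupp.degree_eq_sum]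
    exact ⟨hσ, by simp⟩

lemma exists_rep (l s : ℕ) (hs : s < l) (P : MvPolynomial (Fin n) F)
    (hP : ∀ a i, i.degree < l → coeff i (tr a P) = 0) :
    ∃ h : (Fin n →₀ ℕ) → MvPolynomial (Fin n) F,
      P = ∑ τ ∈ Finset.finsuppAntidiag Finset.univ s, h τ * ∏ i, gg i ^ τ i ∧
      ∀ τ, (h τ).totalDegree ≤ P.totalDegree - s * Fintype.card F := by
  classical
  induction s with
  | zero => exact ⟨fun _ => P, by simp, by simp⟩
  | succ s ih =>
    obtain ⟨h, hrep, hdeg⟩ := ih (by omega)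
    have key : ∀ τ : Fin n →₀ ℕ, ∃ k : Fin n → MvPolynomial (Fin n) F,
        (∀ j, (k j).totalDegree ≤ P.totalDegree - (s + 1) * Fintype.card F) ∧
        (τ.degree = s → h τ = ∑ j, k j * gg j) := by
      intro τ
      by_cases hτ : τ.degree = s
      · obtain ⟨k, hk, hk'⟩ := combinatorial_nullstellensatz_exists_linearCombination
          (fun _ : Fin n => (Finset.univ : Finset F)) (fun _ => Finset.univ_nonempty) (h τ)
          (fun x _ => vanish_of_rep l s (by omega) P hP h hrep τ hτ x)
        refine ⟨k, fun j => ?_, fun _ => ?_⟩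
        · by_cases hj : k j = 0
          · simp [hj]
          · have h1 := hk j
            change (gg j * k j).totalDegree ≤ _ at h1
            rw [totalDegree_mul_of_isDomain (totalDegree_gg j).2 hj, (totalDegree_gg j).1] at h1
            have h2 := hdeg τ
            rw [Nat.succ_mul]
            omega
        · rw [hk', Finsupp.linearCombination_apply, Finsupp.sum_fintype _ _ (by simp)]
          rfl
      · exact ⟨0, by simp, fun hc => absurd hc hτ⟩
    choose k hk hk' using key
    refine ⟨fun σ => ∑ τ ∈ Finset.finsuppAntidiag Finset.univ s, ∑ j,
      if τ + Finsupp.single j 1 = σ then k τ j else 0, ?_, ?_⟩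
    · simp only [Finset.sum_mul, ite_mul, zero_mul]
      rw [Finset.sum_comm]
      conv_lhs => rw [hrep]
      refine Finset.sum_congr rfl fun τ hτ => ?_
      have hτ' : τ.degree = s := by
        rw [Finsupp.degree_eq_sum]; exact (Finset.mem_finsuppAntidiag.1 hτ).1
      rw [Finset.sum_comm, hk' τ hτ', Finset.sum_mul]
      refine Finset.sum_congr rfl fun j _ => ?_
      rw [Finset.sum_ite_eq, if_pos]
      · simp only [Finsupp.add_apply, pow_add, Finset.prod_mul_distrib]
        have : ∏ i, (gg i : MvPolynomial (Fin n) F) ^ (Finsupp.single j 1 i) = gg j := by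
          rw [Finset.prod_eq_single j] <;> simp +contextual [eq_comm]
        rw [this]; ring
      · rw [Finset.mem_finsuppAntidiag, ← Finsupp.degree_eq_sum]
        simp [hτ']
    · intro σ
      refine totalDegree_finsetSum_le fun τ _ => totalDegree_finsetSum_le fun j _ => ?_
      split_ifs
      · exact hk τ j
      · simp

lemma grid (l : ℕ) (P : MvPolynomial (Fin n) F) (hd : P.totalDegree < l * Fintype.card F)
    (hP : ∀ a i, i.degree < l → coeff i (tr a P) = 0) : P = 0 := by
  cases l with
  | zero => simp at hd
  | succ l =>
    obtain ⟨h, hrep, hdeg⟩ := exists_rep (l + 1) l (by omega) P hP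
    rw [hrep]
    refine Finset.sum_eq_zero fun τ hτ => ?_
    have hτ' : τ.degree = l := by
      rw [Finsupp.degree_eq_sum]; exact (Finset.mem_finsuppAntidiag.1 hτ).1
    have : h τ = 0 := by
      refine eq_zero_of_eval_zero_at_prod_finset (h τ) (fun _ => Finset.univ) (fun i => ?_)
        (fun x _ => vanish_of_rep (l + 1) l (by omega) P hP h hrep τ hτ' x)
      refine lt_of_le_of_lt ((degreeOf_le_totalDegree _ _).trans (hdeg τ)) ?_
      rw [Nat.succ_mul] at hd
      have := Fintype.card_pos (α := F)
      rw [Finset.card_univ]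
      omega
    rw [this, zero_mul]

lemma line_vanish (P : MvPolynomial (Fin n) F) (M : (Fin n → F) → ℕ) (l : ℕ)
    (hd : P.totalDegree < l * Fintype.card F)
    (hM : ∀ x i, i.degree < M x → coeff i (tr x P) = 0) (a b : Fin n → F)
    (hab : l * (2 * Fintype.card F - 1) ≤ ∑ t : F, M (a + t • b)) (i : Fin n →₀ ℕ)
    (hi : i.degree < l) :
    coeff i (tr b (homogeneousComponent P.totalDegree P)) = 0 := by
  classical
  obtain ⟨h1, h2⟩ := R.main a b P i
  rw [← h2]
  suffices coeff i (gl a b P) = 0 by rw [this]; simp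
  let E : F → ℕ := fun t => if t = 0 then M a else M (a + t • b) - i.degree
  have hdvd : ∏ t : F, (Polynomial.X - Polynomial.C t) ^ E t ∣ coeff i (gl a b P) := by
    apply Finset.prod_dvd_of_coprime
    · intro s _ t _ hst
      exact (Polynomial.pairwise_coprime_X_sub_C Function.injective_id hst).pow
    · intro t _
      by_cases ht : t = 0
      · subst ht
        simpa [E] using zero_main a b P (M a) (hM a) i
      · simpa [E, ht] using O.main a b t P _ (hM (a + t • b)) i
  by_contra hne
  have h3 := Polynomial.natDegree_le_of_dvd hdvd hne
  rw [Polynomial.natDegree_prod _ _ (fun t _ => pow_ne_zero _ (Polynomial.X_sub_C_ne_zero t))] at h3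
  simp only [Polynomial.natDegree_pow, Polynomial.natDegree_X_sub_C, mul_one] at h3
  have h4 : ∑ t : F, M (a + t • b) ≤ ∑ t : F, E t + (Fintype.card F - 1) * i.degree := by
    rw [← Finset.add_sum_erase _ _ (Finset.mem_univ (0 : F)),
      ← Finset.add_sum_erase _ E (Finset.mem_univ (0 : F))]
    have h5 : ∑ t ∈ Finset.univ.erase (0 : F), M (a + t • b) ≤
        ∑ t ∈ Finset.univ.erase (0 : F), (E t + i.degree) := by
      refine Finset.sum_le_sum fun t ht => ?_
      simp only [E, if_neg (Finset.mem_erase.1 ht).1]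
      omega
    rw [Finset.sum_add_distrib, Finset.sum_const, Finset.card_erase_of_mem (Finset.mem_univ _),
      Finset.card_univ, smul_eq_mul] at h5
    have : E 0 = M a := by simp [E]
    rw [this]
    simp only [zero_smul, add_zero]
    omega
  have hq := Fintype.card_pos (α := F)
  obtain ⟨c, hc⟩ : ∃ c, Fintype.card F = c + 1 := ⟨Fintype.card F - 1, by omega⟩
  rw [hc] at hab h4 hd
  have e1 : 2 * (c + 1) - 1 = 2 * c + 1 := by omega
  rw [e1] at hab
  rw [Nat.add_sub_cancel] at h4
  have : c * i.degree ≤ c * l := Nat.mul_le_mul_left _ hi.le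
  nlinarith

lemma count_bound (hn : 1 ≤ n) (M : (Fin n → F) → ℕ) (l : ℕ)
    (hline : ∀ b : Fin n → F, b ≠ 0 → ∃ a : Fin n → F,
      l * (2 * Fintype.card F - 1) ≤ ∑ t : F, M (a + t • b)) :
    (expo n (l * Fintype.card F)).card ≤ ∑ x, (expo n (M x)).card := by
  classical
  by_contra hc
  obtain ⟨P, hP0, hd, hM⟩ := exists_poly _ M (not_le.1 hc)
  set H := homogeneousComponent P.totalDegree P with hH
  have hne : H ≠ 0 := by
    intro h0
    obtain ⟨e, he, hed⟩ := P.support.exists_mem_eq_sup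
      (by rwa [Finset.nonempty_iff_ne_empty, Ne, support_eq_empty]) (fun e => e.degree)
    have h1 := coeff_homogeneousComponent P.totalDegree P e
    rw [← hH, h0, if_pos (show e.degree = P.totalDegree from hed.symm)] at h1
    exact (mem_support_iff.1 he) (by simpa using h1.symm)
  have hb : ∀ b : Fin n → F, b ≠ 0 → ∀ i : Fin n →₀ ℕ, i.degree < l → coeff i (tr b H) = 0 := by
    intro b hb i hi
    obtain ⟨a, ha⟩ := hline b hb
    exact line_vanish P M l hd hM a b ha i hi
  have hhom : H.IsHomogeneous P.totalDegree := homogeneousComponent_isHomogeneous _ _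
  have htr0 : tr (0 : Fin n → F) H = H := by
    have : tr (0 : Fin n → F) = AlgHom.id F _ := by
      apply MvPolynomial.algHom_ext
      intro j; simp [tr]
    rw [this]; rfl
  apply hne
  refine grid l H (lt_of_le_of_lt hhom.totalDegree_le hd) ?_
  intro b i hi
  by_cases hb0 : b = 0
  · subst hb0
    rw [htr0]
    by_cases hdi : i.degree = P.totalDegree
    ·
      have hone : (fun _ => 1 : Fin n → F) ≠ 0 := by
        intro h
        have := congrFun h ⟨0, hn⟩
        simp at this
      have hz : tr (fun _ => 1 : Fin n → F) H = 0 := by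
        ext j
        rw [coeff_zero]
        by_cases hj : j.degree < l
        · exact hb _ hone j hj
        · apply coeff_eq_zero_of_totalDegree_lt
          refine lt_of_le_of_lt ((totalDegree_tr _ _).trans hhom.totalDegree_le) ?_
          rw [← hdi]
          exact lt_of_lt_of_le hi (not_lt.1 hj)
      rw [tr_inj _ _ hz, coeff_zero]
    · by_contra hcc
      exact hdi ((DFunLike.congr_fun Finsupp.degree_eq_weight_one i).trans (hhom hcc))
  · exact hb b hb0 i hi

lemma prod_bound (hn : 1 ≤ n) (g : (Fin n → F) → ℕ) (r k : ℕ)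
    (hline : ∀ b : Fin n → F, b ≠ 0 → ∃ a : Fin n → F, r ≤ ∑ t : F, g (a + t • b)) :
    ∏ j ∈ Finset.range n, (k * r * Fintype.card F + j) ≤
      ∑ x, ∏ j ∈ Finset.range n, (k * (2 * Fintype.card F - 1) * g x + j) := by
  have h := count_bound hn (fun x => k * (2 * Fintype.card F - 1) * g x) (k * r) (by
    intro b hb
    obtain ⟨a, ha⟩ := hline b hb
    refine ⟨a, ?_⟩
    rw [← Finset.mul_sum]
    calc _ = k * (2 * Fintype.card F - 1) * r := by ring
      _ ≤ _ := Nat.mul_le_mul_left _ ha)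
  have h2 := Nat.mul_le_mul_left n.factorial h
  rw [Finset.mul_sum, card_expo hn] at h2
  simpa only [card_expo hn] using h2

lemma limit_bound (hn : 1 ≤ n) (g : (Fin n → F) → ℕ) (r : ℕ)
    (hline : ∀ b : Fin n → F, b ≠ 0 → ∃ a : Fin n → F, r ≤ ∑ t : F, g (a + t • b)) :
    ((r : ℝ) * Fintype.card F) ^ n ≤ ∑ x, ((2 * Fintype.card F - 1 : ℝ) * g x) ^ n := by
  have hlim : Filter.Tendsto (fun k : ℕ => ∑ x, ∏ j ∈ Finset.range n,
      ((2 * Fintype.card F - 1 : ℝ) * g x + (j : ℝ) / (k : ℝ))) Filter.atTop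
      (nhds (∑ x, ∏ _j ∈ Finset.range n, ((2 * Fintype.card F - 1 : ℝ) * g x + 0))) := by
    refine tendsto_finsetSum _ fun x _ => tendsto_finsetProd _ fun j _ => ?_
    exact tendsto_const_nhds.add (tendsto_const_div_atTop_nhds_zero_nat _)
  simp only [add_zero, Finset.prod_const, Finset.card_range] at hlim
  refine ge_of_tendsto hlim ?_
  filter_upwards [Filter.eventually_gt_atTop 0] with k hk
  have hk' : (0 : ℝ) < k := by exact_mod_cast hk
  have h := prod_bound hn g r k hline
  have hq := Fintype.card_pos (α := F)
  have h' : ((k : ℝ) * r * Fintype.card F) ^ n ≤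
      ∑ x, ∏ j ∈ Finset.range n, ((k : ℝ) * (2 * Fintype.card F - 1 : ℝ) * g x + j) := by
    have h1 : ((k * r * Fintype.card F) ^ n : ℕ) ≤
        ∏ j ∈ Finset.range n, (k * r * Fintype.card F + j) := by
      calc _ = ∏ _j ∈ Finset.range n, (k * r * Fintype.card F) := by simp
        _ ≤ _ := Finset.prod_le_prod' fun j _ => by omega
    have h2 : (((k * r * Fintype.card F) ^ n : ℕ) : ℝ) ≤ _ := Nat.cast_le.2 (h1.trans h)
    push_cast [Nat.cast_sub (show 1 ≤ 2 * Fintype.card F by omega)] at h2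
    exact h2
  have e : ∀ x, ∏ j ∈ Finset.range n, ((k : ℝ) * (2 * Fintype.card F - 1 : ℝ) * g x + j) =
      (k : ℝ) ^ n * ∏ j ∈ Finset.range n,
        ((2 * Fintype.card F - 1 : ℝ) * g x + (j : ℝ) / (k : ℝ)) := by
    intro x
    have : (k : ℝ) ^ n = ∏ _j ∈ Finset.range n, (k : ℝ) := by simp
    rw [this, ← Finset.prod_mul_distrib]
    refine Finset.prod_congr rfl fun j _ => ?_
    field_simp
  simp only [e] at h'
  rw [← Finset.mul_sum, mul_assoc, mul_pow] at h'
  exact le_of_mul_le_mul_left h' (by positivity)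

end KakeyaNorm

/-- Norm bound for functions with large line sums: if `f : F_q^n → ℤ` is such that in every
direction `γ` there is a line `E_γ` in direction `γ` with `Σ_{x ∈ E_γ} |f(x)| ≥ r`, then
`Σ_x |f(x)|^n ≥ r^n / (2 − q^{-1})^n`. -/
theorem norm_bound_lines {F : Type*} [Field F] [Fintype F] (q n : ℕ) (r : ℕ)
    (hq : Fintype.card F = q) (hn : 1 ≤ n)
    (f : (Fin n → F) → ℤ)
    (hline : ∀ γ : Fin n → F, γ ≠ 0 → ∃ a : Fin n → F,
      (r : ℤ) ≤ ∑ t : F, |f (a + t • γ)|) :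
    (r : ℝ) ^ n / (2 - (q : ℝ)⁻¹) ^ n ≤ ∑ x : Fin n → F, (|f x| : ℝ) ^ n := by
  have h := KakeyaNorm.limit_bound hn (fun x => (f x).natAbs) r (by
    intro b hb
    obtain ⟨a, ha⟩ := hline b hb
    refine ⟨a, ?_⟩
    zify
    exact ha)
  have hq1 : (1 : ℝ) ≤ q := by
    rw [← hq]; exact_mod_cast Fintype.card_pos (α := F)
  rw [hq] at h
  simp only [mul_pow] at h
  rw [← Finset.mul_sum] at h
  have e : ∀ x, (((f x).natAbs : ℕ) : ℝ) = |(f x : ℝ)| := by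
    intro x
    rw [Nat.cast_natAbs]; simp
  simp only [e] at h
  have e2 : (2 - (q : ℝ)⁻¹) = (2 * q - 1) / q := by field_simp
  have hpos : (0 : ℝ) < 2 * q - 1 := by linarith
  rw [e2, div_pow, div_div_eq_mul_div, div_le_iff₀ (by positivity)]
  linarith
end

section
/- (Entropic Kakeya bound, k = 1) For any random variable R supported on F_q^n, there exists a surjective linear map φ: F_q^n → F_q^{n−1} such that H_∞^q(φ(R)) ≥ ((n−1)/n)·H_∞^q(R) − log_q(2 − q^{-1}). -/
/-- The `q`-ary min-entropy of a random variable (probability mass function) `p`: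
`H_∞^q(p) = −log_q (max_w Pr[p = w])`. -/
noncomputable def minEntropy {α : Type*} (q : ℕ) (p : PMF α) : ℝ :=
  - Real.logb q (⨆ w : α, (p w).toReal)
open MvPolynomial

/-- translate of a polynomial -/
noncomputable def kshift {n : ℕ} {F : Type*} [Field F] (a : Fin n → F) :
    MvPolynomial (Fin n) F →ₐ[F] MvPolynomial (Fin n) F :=
  aeval (fun k => X k + C (a k))

/-- vanishing to order `m` at `a` -/
def kvan {n : ℕ} {F : Type*} [Field F] (P : MvPolynomial (Fin n) F) (a : Fin n → F) (m : ℕ) : Prop :=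
  ∀ j : Fin n →₀ ℕ, j.degree < m → coeff j (kshift a P) = 0

/-- univariate root count -/
lemma kuniv {F : Type*} [Field F] [Fintype F] (g : Polynomial F) (hg : g ≠ 0) (e : F → ℕ)
    (h : ∀ t, (Polynomial.X - Polynomial.C t) ^ e t ∣ g) : ∑ t, e t ≤ g.natDegree := by
  have h1 : (∏ t, (Polynomial.X - Polynomial.C t) ^ e t) ∣ g := by
    apply Fintype.prod_dvd_of_coprime _ h
    intro s t hst
    exact (Polynomial.isCoprime_X_sub_C_of_isUnit_sub (sub_ne_zero.2 hst).isUnit).pow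
  have h2 := Polynomial.natDegree_le_of_dvd h1 hg
  rw [Polynomial.natDegree_prod _ _ (fun t _ => pow_ne_zero _ (Polynomial.X_sub_C_ne_zero t))] at h2
  simpa using h2

lemma kscale {n : ℕ} {A : Type*} [CommRing A] (s : A) (G : MvPolynomial (Fin n) A)
    (i : Fin n →₀ ℕ) :
    coeff i (aeval (fun k => C s * X k : Fin n → MvPolynomial (Fin n) A) G)
      = s ^ i.degree * coeff i G := by
  classical
  induction G using MvPolynomial.induction_on' with
  | add p q hp hq => simp only [map_add, coeff_add, hp, hq, mul_add]
  | monomial u a =>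
    have : aeval (fun k => C s * X k : Fin n → MvPolynomial (Fin n) A) (monomial u a)
        = monomial u (s ^ u.degree * a) := by
      rw [aeval_monomial, monomial_eq, Finsupp.prod, Finsupp.prod]
      simp_rw [mul_pow]
      rw [Finset.prod_mul_distrib, Finset.prod_pow_eq_pow_sum, Finsupp.degree_apply]
      simp only [algebraMap_eq, C_mul, C_pow]
      ring
    rw [this, coeff_monomial, coeff_monomial]
    split_ifs with h
    · rw [h]
    · simp

lemma khomog {n : ℕ} {F A : Type*} [Field F] [CommRing A] [Algebra F A] (s : A)
    (v : Fin n → A) (e : ℕ) (Q : MvPolynomial (Fin n) F) (hQ : Q.IsHomogeneous e) :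
    aeval (fun k => s * v k) Q = s ^ e * aeval v Q := by
  classical
  rw [Q.as_sum, map_sum, map_sum, Finset.mul_sum]
  refine Finset.sum_congr rfl fun u hu => ?_
  have hd := hQ.degree_eq_sum_deg_support hu
  rw [aeval_monomial, aeval_monomial, Finsupp.prod, Finsupp.prod]
  simp_rw [mul_pow]
  rw [Finset.prod_mul_distrib, Finset.prod_pow_eq_pow_sum]
  rw [← hd]
  ring

/-- key identity for homogeneous polynomials -/
lemma kcoeff_homog {n : ℕ} {F : Type*} [Field F] (s : Polynomial F)
    (b : Fin n → F) (e : ℕ) (Q : MvPolynomial (Fin n) F) (hQ : Q.IsHomogeneous e)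
    (i : Fin n →₀ ℕ) :
    s ^ i.degree * coeff i (aeval (fun k => X k + C (s * Polynomial.C (b k)) :
        Fin n → MvPolynomial (Fin n) (Polynomial F)) Q)
      = s ^ e * Polynomial.C (coeff i (kshift b Q)) := by
  rw [← kscale]
  have h1 : aeval (fun k => C s * X k : Fin n → MvPolynomial (Fin n) (Polynomial F))
      (aeval (fun k => X k + C (s * Polynomial.C (b k)) :
        Fin n → MvPolynomial (Fin n) (Polynomial F)) Q)
      = aeval (fun k => C s * (X k + C (Polynomial.C (b k))) :
        Fin n → MvPolynomial (Fin n) (Polynomial F)) Q := by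
    have := DFunLike.congr_fun (MvPolynomial.algHom_ext (f := ((aeval (fun k => C s * X k :
      Fin n → MvPolynomial (Fin n) (Polynomial F))).restrictScalars F).comp
      (aeval (fun k => X k + C (s * Polynomial.C (b k)) :
        Fin n → MvPolynomial (Fin n) (Polynomial F))))
      (g := aeval (fun k => C s * (X k + C (Polynomial.C (b k))) :
        Fin n → MvPolynomial (Fin n) (Polynomial F))) (by
          intro k
          simp [mul_add, algebraMap_eq])) Q
    simpa using this
  rw [h1, khomog _ _ e Q hQ, ← C_pow, coeff_C_mul]
  congr 1
  have h2 : aeval (fun k => X k + C (Polynomial.C (b k)) :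
        Fin n → MvPolynomial (Fin n) (Polynomial F)) Q = map Polynomial.C (kshift b Q) := by
    have := DFunLike.congr_fun (MvPolynomial.algHom_ext (f := (aeval
      (fun k => X k + C (Polynomial.C (b k)) :
        Fin n → MvPolynomial (Fin n) (Polynomial F))))
      (g := (mapAlgHom (Polynomial.CAlgHom (R := F) (A := F))).comp (kshift b)) (by
          intro k
          simp [kshift])) Q
    rw [this]
    rfl
  rw [h2, coeff_map]

/-- the restriction to a line -/
noncomputable def kline {n : ℕ} {F : Type*} [Field F] (a b : Fin n → F) :
    MvPolynomial (Fin n) F →ₐ[F] MvPolynomial (Fin n) (Polynomial F) :=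
  aeval (fun k => X k + C (Polynomial.C (a k) + Polynomial.X * Polynomial.C (b k)))

lemma kline_eq {n : ℕ} {F : Type*} [Field F] (a b : Fin n → F) (t : F)
    (P : MvPolynomial (Fin n) F) :
    kline a b P = aeval (fun k => X k + C ((Polynomial.X - Polynomial.C t) * Polynomial.C (b k)) :
        Fin n → MvPolynomial (Fin n) (Polynomial F)) (kshift (a + t • b) P) := by
  have := DFunLike.congr_fun (MvPolynomial.algHom_ext (f := kline a b)
      (g := (aeval (fun k => X k + C ((Polynomial.X - Polynomial.C t) * Polynomial.C (b k)) :
        Fin n → MvPolynomial (Fin n) (Polynomial F))).comp (kshift (a + t • b))) (by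
          intro k
          simp only [kline, kshift, AlgHom.comp_apply, aeval_X, map_add, Pi.add_apply,
            Pi.smul_apply, smul_eq_mul, aeval_C, sub_mul, C_sub, map_mul]
          simp only [IsScalarTower.algebraMap_apply F (Polynomial F)
            (MvPolynomial (Fin n) (Polynomial F)), algebraMap_eq, Polynomial.algebraMap_eq]
          ring)) P
  simpa using this

lemma kline_coeff {n : ℕ} {F : Type*} [Field F] (a b : Fin n → F) (t : F)
    (P : MvPolynomial (Fin n) F) (i : Fin n →₀ ℕ) :
    (Polynomial.X - Polynomial.C t) ^ i.degree * coeff i (kline a b P)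
      = ∑ e ∈ Finset.range ((kshift (a + t • b) P).totalDegree + 1),
        (Polynomial.X - Polynomial.C t) ^ e *
          Polynomial.C (coeff i (kshift b (homogeneousComponent e (kshift (a + t • b) P)))) := by
  rw [kline_eq a b t P]
  conv_lhs => rw [← sum_homogeneousComponent (kshift (a + t • b) P)]
  rw [map_sum, coeff_sum, Finset.mul_sum]
  refine Finset.sum_congr rfl fun e _ => ?_
  exact kcoeff_homog _ b e _ (homogeneousComponent_isHomogeneous _ _) i

lemma kline_dvd {n : ℕ} {F : Type*} [Field F] (a b : Fin n → F) (t : F)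
    (P : MvPolynomial (Fin n) F) (i : Fin n →₀ ℕ) (m : ℕ) (h : kvan P (a + t • b) m) :
    (Polynomial.X - Polynomial.C t) ^ (m - i.degree) ∣ coeff i (kline a b P) := by
  rcases le_total m i.degree with hm | hm
  · simp [Nat.sub_eq_zero_of_le hm]
  have h1 : (Polynomial.X - Polynomial.C t) ^ m ∣
      (Polynomial.X - Polynomial.C t) ^ i.degree * coeff i (kline a b P) := by
    rw [kline_coeff]
    refine Finset.dvd_sum fun e _ => ?_
    rcases lt_or_ge e m with he | he
    · have : homogeneousComponent e (kshift (a + t • b) P) = 0 := by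
        ext j
        rw [coeff_homogeneousComponent]
        split_ifs with hj
        · rw [h j (by omega), coeff_zero]
        · simp
      simp [this]
    · exact Dvd.dvd.mul_right (pow_dvd_pow _ he) _
  obtain ⟨k, rfl⟩ := Nat.exists_eq_add_of_le hm
  rw [pow_add] at h1
  rw [Nat.add_sub_cancel_left]
  exact (mul_dvd_mul_iff_left (pow_ne_zero _ (Polynomial.X_sub_C_ne_zero t))).1 h1

/-- small-degree predicate -/
def ksmall {n : ℕ} {F : Type*} [Field F] (d : ℕ) (A : MvPolynomial (Fin n) F) : Prop :=
  ∀ j : Fin n →₀ ℕ, d ≤ j.degree → coeff j A = 0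

lemma ksmall_X {n : ℕ} {F : Type*} [Field F] (d : ℕ) (A : MvPolynomial (Fin n) F)
    (k : Fin n) (h : ksmall d A) : ksmall (d + 1) (A * X k) := by
  classical
  intro j hj
  rw [coeff_mul_X']
  split_ifs with hk
  · apply h
    have h1 : Finsupp.single k 1 ≤ j := by
      rw [Finsupp.single_le_iff]
      exact Nat.one_le_iff_ne_zero.2 (Finsupp.mem_support_iff.1 hk)
    have h2 : (j - Finsupp.single k 1 + Finsupp.single k 1).degree = j.degree := by
      rw [tsub_add_cancel_of_le h1]
    rw [map_add, Finsupp.degree_single] at h2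
    omega
  · rfl

lemma ksmall_C {n : ℕ} {F : Type*} [Field F] (d : ℕ) (A : MvPolynomial (Fin n) F)
    (c : F) (h : ksmall d A) : ksmall d (A * C c) := by
  intro j hj
  rw [mul_comm, coeff_C_mul, h j hj, mul_zero]

lemma ksmall_mono {n : ℕ} {F : Type*} [Field F] (d e : ℕ) (A : MvPolynomial (Fin n) F)
    (hd : d ≤ e) (h : ksmall d A) : ksmall e A := fun j hj => h j (hd.trans hj)

lemma ksmall_add {n : ℕ} {F : Type*} [Field F] (d : ℕ) (A B : MvPolynomial (Fin n) F)
    (h : ksmall d A) (h' : ksmall d B) : ksmall d (A + B) := by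
  intro j hj
  rw [coeff_add, h j hj, h' j hj, add_zero]

lemma ksmall_shift_monomial {n : ℕ} {F : Type*} [Field F] (a : Fin n → F) (u : Fin n →₀ ℕ) (c : F) :
    ksmall u.degree (kshift a (monomial u c) - monomial u c) := by
  classical
  induction hd : u.degree generalizing u with
  | zero =>
    have : u = 0 := (Finsupp.degree_eq_zero_iff u).1 hd
    subst this
    intro j _
    simp [kshift]
  | succ d ih =>
    have hne : u ≠ 0 := by rintro rfl; simp at hd
    obtain ⟨k, hk⟩ := Finsupp.ne_iff.1 hne
    have h1 : Finsupp.single k 1 ≤ u := by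
      rw [Finsupp.single_le_iff]
      exact Nat.one_le_iff_ne_zero.2 hk
    obtain ⟨v, rfl⟩ := exists_add_of_le h1
    have hv : v.degree = d := by
      rw [map_add, Finsupp.degree_single] at hd; omega
    have h2 : (monomial (Finsupp.single k 1 + v) c : MvPolynomial (Fin n) F)
        = monomial v c * X k := by
      rw [add_comm, monomial_add_single, pow_one]
    have h3 : kshift a (monomial (Finsupp.single k 1 + v) c) -
        monomial (Finsupp.single k 1 + v) c =
        (kshift a (monomial v c) - monomial v c) * X k +
        ((kshift a (monomial v c) - monomial v c) * C (a k) + monomial v c * C (a k)) := by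
      rw [h2, map_mul]
      have : kshift a (X k) = X k + C (a k) := by simp [kshift]
      rw [this]; ring
    rw [h3]
    refine ksmall_add _ _ _ (ksmall_X _ _ _ (ih v hv)) (ksmall_add _ _ _ ?_ ?_)
    · exact ksmall_mono d _ _ (by omega) (ksmall_C _ _ _ (ih v hv))
    · apply ksmall_C
      intro j hj
      rw [coeff_monomial, if_neg]
      rintro rfl
      omega

lemma kshift_top {n : ℕ} {F : Type*} [Field F] (a : Fin n → F) (P : MvPolynomial (Fin n) F)
    (j : Fin n →₀ ℕ) (hj : P.totalDegree ≤ j.degree) : coeff j (kshift a P) = coeff j P := by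
  classical
  rw [← sub_eq_zero, ← coeff_sub]
  have : kshift a P - P = ∑ u ∈ P.support, (kshift a (monomial u (coeff u P)) -
      monomial u (coeff u P)) := by
    rw [Finset.sum_sub_distrib, ← map_sum, ← P.as_sum]
  rw [this, coeff_sum]
  refine Finset.sum_eq_zero fun u hu => ksmall_shift_monomial a u _ j (le_trans ?_ hj)
  exact le_totalDegree hu

lemma kshift_totalDegree {n : ℕ} {F : Type*} [Field F] (a : Fin n → F)
    (P : MvPolynomial (Fin n) F) : (kshift a P).totalDegree ≤ P.totalDegree := by
  refine Finset.sup_le fun u hu => ?_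
  by_contra hlt
  push Not at hlt
  have h1 := kshift_top a P u hlt.le
  rw [coeff_eq_zero_of_totalDegree_lt hlt] at h1
  exact mem_support_iff.1 hu h1

lemma kline_degree {n : ℕ} {F : Type*} [Field F] (a b : Fin n → F)
    (P : MvPolynomial (Fin n) F) (i : Fin n →₀ ℕ) :
    (Polynomial.X ^ i.degree * coeff i (kline a b P)).natDegree ≤ P.totalDegree ∧
    (Polynomial.X ^ i.degree * coeff i (kline a b P)).coeff P.totalDegree =
      coeff i (kshift b (homogeneousComponent P.totalDegree P)) := by
  have h := kline_coeff a b 0 P i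
  simp only [map_zero, sub_zero, zero_smul, add_zero] at h
  rw [h]
  have hd := kshift_totalDegree a P
  constructor
  · apply Polynomial.natDegree_sum_le_of_forall_le
    intro e he
    rw [Finset.mem_range] at he
    refine (Polynomial.natDegree_mul_C_le _ _).trans ?_
    rw [Polynomial.natDegree_X_pow]; omega
  · rw [Polynomial.finsetSum_coeff]
    have ht : homogeneousComponent P.totalDegree (kshift a P) = homogeneousComponent P.totalDegree P := by
      ext j
      rw [coeff_homogeneousComponent, coeff_homogeneousComponent]
      split_ifs with hj
      · exact kshift_top a P j hj.ge
      · rfl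
    rw [← ht]
    simp only [Polynomial.coeff_mul_C, Polynomial.coeff_X_pow, ite_mul, one_mul, zero_mul]
    rw [Finset.sum_ite_eq]
    split_ifs with hr
    · rfl
    · rw [Finset.mem_range] at hr
      rw [homogeneousComponent_eq_zero _ _ (by omega)]
      simp

lemma ksz_aux {n : ℕ} {F : Type*} [Field F] (y : Fin n → F)
    (H : MvPolynomial (Fin (n + 1)) F) :
    (finSuccEquiv (Polynomial F) n (kline (Fin.cons 0 y) (Fin.cons 1 0) H)).coeff 0 =
      Polynomial.eval₂ ((map Polynomial.C).comp (kshift y : _ →+* MvPolynomial (Fin n) F))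
        (C Polynomial.X) (finSuccEquiv F n H) := by
  have h : ((Polynomial.constantCoeff.comp
      (finSuccEquiv (Polynomial F) n : _ →+* Polynomial (MvPolynomial (Fin n) (Polynomial F)))).comp
      (kline (Fin.cons 0 y) (Fin.cons 1 0) :
        MvPolynomial (Fin (n + 1)) F →+* MvPolynomial (Fin (n + 1)) (Polynomial F))) =
      (Polynomial.eval₂RingHom ((map Polynomial.C).comp
        (kshift y : _ →+* MvPolynomial (Fin n) F)) (C Polynomial.X)).comp
        (finSuccEquiv F n : _ →+* Polynomial (MvPolynomial (Fin n) F)) := by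
    apply MvPolynomial.ringHom_ext
    · intro r
      simp [kline, kshift, finSuccEquiv_apply,
        IsScalarTower.algebraMap_apply F (Polynomial F)
            (MvPolynomial (Fin (n + 1)) (Polynomial F)), algebraMap_eq]
    · intro k
      refine Fin.cases ?_ (fun k => ?_) k
      · simp [kline, finSuccEquiv_apply]
      · simp [kline, kshift, finSuccEquiv_apply]
  exact DFunLike.congr_fun h H

lemma ksz_coeff {n : ℕ} {F : Type*} [Field F] (y : Fin n → F)
    (H : MvPolynomial (Fin (n + 1)) F) (i : Fin n →₀ ℕ) (j : ℕ) :
    (coeff (i.cons 0) (kline (Fin.cons 0 y) (Fin.cons 1 0) H)).coeff j =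
      coeff i (kshift y ((finSuccEquiv F n H).coeff j)) := by
  rw [← finSuccEquiv_coeff_coeff, ksz_aux, Polynomial.eval₂_eq_sum_range, coeff_sum,
    Polynomial.finsetSum_coeff]
  simp only [RingHom.comp_apply, ← C_pow, mul_comm _ (C _), coeff_C_mul, coeff_map,
    Polynomial.coeff_mul_C, Polynomial.coeff_X_pow, ite_mul, one_mul, zero_mul]
  rw [Finset.sum_ite_eq]
  split_ifs with hr
  · rfl
  · rw [Finset.mem_range] at hr
    rw [Polynomial.coeff_eq_zero_of_natDegree_lt (by omega)]
    simp

lemma kshift_zero {n : ℕ} {F : Type*} [Field F] (P : MvPolynomial (Fin n) F) :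
    kshift 0 P = P := by
  simp [kshift]

/-- Schwartz-Zippel with multiplicities, uniform version -/
lemma ksz {F : Type*} [Field F] [Fintype F] : ∀ (n : ℕ) (H : MvPolynomial (Fin n) F) (_ : H ≠ 0)
    (w : ℕ) (_ : ∀ a, kvan H a w), Fintype.card F * w ≤ H.totalDegree := by
  classical
  intro n
  induction n with
  | zero =>
    intro H hH w hw
    rcases Nat.eq_zero_or_pos w with rfl | hpos
    · simp
    · exfalso
      apply hH
      ext j
      have := hw 0 j (by rw [Subsingleton.elim j 0]; simpa using hpos)
      rwa [kshift_zero] at this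
  | succ n ih =>
    intro H hH w hw
    set f := finSuccEquiv F n H with hf
    have hf0 : f ≠ 0 := by
      rw [hf]; exact (map_ne_zero_iff _ (finSuccEquiv F n).injective).2 hH
    have hl : f.leadingCoeff ≠ 0 := Polynomial.leadingCoeff_ne_zero.2 hf0
    have hex : ∃ m, ∃ (y : Fin n → F) (i : Fin n →₀ ℕ), i.degree = m ∧
        coeff i (kshift y f.leadingCoeff) ≠ 0 := by
      obtain ⟨i, hi⟩ := ne_zero_iff.1 hl
      exact ⟨_, 0, i, rfl, by rwa [kshift_zero]⟩
    obtain ⟨y, i, him, hi⟩ := Nat.find_spec hex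
    have hmin := fun m (h : m < Nat.find hex) => Nat.find_min hex h
    generalize Nat.find hex = m at *
    have h1 := ih f.leadingCoeff hl m (by
      intro z j hj
      by_contra hne
      exact hmin _ hj ⟨z, j, rfl, hne⟩)
    have h2 := totalDegree_coeff_finSuccEquiv_add_le H f.natDegree hl
    change f.leadingCoeff.totalDegree + _ ≤ _ at h2
    set g := coeff (i.cons 0) (kline (Fin.cons 0 y) (Fin.cons 1 0) H) with hg
    have hgc : ∀ j, g.coeff j = coeff i (kshift y (f.coeff j)) := ksz_coeff y H i
    have hg0 : g ≠ 0 := by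
      intro h0
      apply hi
      have := hgc f.natDegree
      rw [h0, Polynomial.coeff_zero] at this
      exact this.symm
    have hdeg : g.natDegree ≤ f.natDegree := by
      rw [Polynomial.natDegree_le_iff_coeff_eq_zero]
      intro j hj
      rw [hgc, Polynomial.coeff_eq_zero_of_natDegree_lt hj]
      simp
    have hid : (i.cons 0).degree = m := by
      rw [← him, Finsupp.degree_eq_sum, Finsupp.degree_eq_sum, Fin.sum_univ_succ]
      simp
    have h3 := kuniv g hg0 (fun _ => w - m) (by
      intro t
      have := kline_dvd (Fin.cons 0 y) (Fin.cons 1 0) t H (i.cons 0) w (hw _)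
      rwa [hid] at this)
    simp only [Finset.sum_const, Finset.card_univ, smul_eq_mul] at h3
    have h4 : Fintype.card F * w ≤ Fintype.card F * (w - m) + Fintype.card F * m := by
      rw [← mul_add]; exact Nat.mul_le_mul_left _ (by omega)
    omega

/-- exponents of degree less than `m` -/
def kmon (n m : ℕ) : Finset (Fin n →₀ ℕ) :=
  (Finset.range m).biUnion (fun e => Finset.finsuppAntidiag Finset.univ e)

lemma mem_kmon {n m : ℕ} (j : Fin n →₀ ℕ) : j ∈ kmon n m ↔ j.degree < m := by
  simp [kmon, Finset.mem_finsuppAntidiag, Finsupp.degree_eq_sum]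

lemma card_kmon (n m : ℕ) : (kmon n (m + 1)).card = (m + n).choose n := by
  rw [kmon, Finset.card_biUnion]
  · simp only [Finset.card_finsuppAntidiag_nat_eq_multichoose, Finset.card_univ, Fintype.card_fin]
    exact Nat.sum_range_multichoose m n
  · intro a _ b _ hab
    rw [Function.onFun, Finset.disjoint_left]
    intro j hj hj'
    rw [Finset.mem_finsuppAntidiag] at hj hj'
    exact hab (hj.1.symm.trans hj'.1)

lemma card_kmon_le (n m : ℕ) : ((kmon n m).card : ℝ) ≤ ((m : ℝ) + n) ^ n / n.factorial := by
  rcases m with _ | m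
  · simp [kmon]; positivity
  · rw [card_kmon]
    refine (Nat.choose_le_pow_div n (m + n)).trans ?_
    gcongr
    push_cast
    linarith

lemma le_card_kmon (n m : ℕ) : ((m : ℝ) + 1) ^ n / n.factorial ≤ ((kmon n (m + 1)).card : ℝ) := by
  rw [card_kmon]
  refine le_trans ?_ (Nat.pow_le_choose n (m + n))
  gcongr
  have : m + n + 1 - n = m + 1 := by omega
  rw [this]; push_cast; rfl

/-- existence of an interpolating polynomial -/
lemma kexists {n : ℕ} {F : Type*} [Field F] [Fintype F] (m : (Fin n → F) → ℕ) (d : ℕ)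
    (h : ∑ x, (kmon n (m x)).card < (kmon n (d + 1)).card) :
    ∃ P : MvPolynomial (Fin n) F, P ≠ 0 ∧ P.totalDegree ≤ d ∧ ∀ x, kvan P x (m x) := by
  classical
  let B : (↥(kmon n (d + 1)) → F) →ₗ[F] MvPolynomial (Fin n) F :=
    ∑ s, (monomial s.1).comp (LinearMap.proj s)
  have hB : ∀ c s, coeff s.1 (B c) = c s := by
    intro c s
    simp only [B, LinearMap.sum_apply, LinearMap.comp_apply, LinearMap.proj_apply, coeff_sum,
      coeff_monomial]
    simp only [← Subtype.ext_iff, Finset.sum_ite_eq', Finset.mem_univ, if_true]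
  have hB' : ∀ c (j : Fin n →₀ ℕ), d < j.degree → coeff j (B c) = 0 := by
    intro c j hj
    simp only [B, LinearMap.sum_apply, LinearMap.comp_apply, LinearMap.proj_apply, coeff_sum,
      coeff_monomial]
    refine Finset.sum_eq_zero fun s _ => if_neg ?_
    intro hs
    have := (mem_kmon s.1).1 s.2
    rw [hs] at this
    omega
  let E : (↥(kmon n (d + 1)) → F) →ₗ[F] ((Σ x, ↥(kmon n (m x))) → F) :=
    LinearMap.pi fun p => (lcoeff F p.2.1).comp ((kshift p.1).toLinearMap.comp B)
  have hk : LinearMap.ker E ≠ ⊥ := by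
    apply LinearMap.ker_ne_bot_of_finrank_lt
    simpa using h
  obtain ⟨c, hc, hc0⟩ := Submodule.exists_mem_ne_zero_of_ne_bot hk
  refine ⟨B c, ?_, ?_, ?_⟩
  · intro h0
    apply hc0
    ext s
    exact (hB c s).symm.trans (by rw [h0]; simp)
  · refine Finset.sup_le fun u hu => ?_
    by_contra hlt
    push Not at hlt
    exact mem_support_iff.1 hu (hB' c u hlt)
  · intro x j hj
    have := congr_fun (LinearMap.mem_ker.1 hc) ⟨x, ⟨j, (mem_kmon j).2 hj⟩⟩
    simpa [E] using this

/-- combinatorial core -/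
lemma kcore {n : ℕ} (hn : 1 ≤ n) {F : Type*} [Field F] [Fintype F] (m : (Fin n → F) → ℕ) (d : ℕ)
    (h : ∑ x, (kmon n (m x)).card < (kmon n (d + 1)).card)
    (hl : ∀ b : Fin n → F, b ≠ 0 → ∃ a, d * (2 * Fintype.card F - 1) <
      Fintype.card F * ∑ t : F, m (a + t • b)) : False := by
  obtain ⟨P, hP, hPd, hv⟩ := kexists m d h
  have hq : 1 < Fintype.card F := Fintype.one_lt_card
  set q := Fintype.card F with hqdef
  set D := P.totalDegree with hD
  set H := homogeneousComponent D P with hH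
  have hHh : H.IsHomogeneous D := homogeneousComponent_isHomogeneous _ _
  have hH0 : H ≠ 0 := by
    obtain ⟨u, hu, hu'⟩ := Finset.exists_mem_eq_sup P.support (support_nonempty.2 hP)
      (fun s => s.sum fun _ e => e)
    have hu2 : u.degree = D := by
      rw [hD, totalDegree, hu']; rfl
    intro h0
    have h1 : coeff u H = coeff u P := by
      rw [hH, coeff_homogeneousComponent, if_pos hu2]
    rw [h0, coeff_zero] at h1
    exact mem_support_iff.1 hu h1.symm
  have hvan : ∀ b ≠ 0, kvan H b (D / q + 1) := by
    intro b hb i hi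
    obtain ⟨a, ha⟩ := hl b hb
    obtain ⟨h1, h2⟩ := kline_degree a b P i
    by_contra hne
    rw [← hD, ← hH] at h2
    rw [← hD] at h1
    set g := coeff i (kline a b P) with hg
    have hg0 : g ≠ 0 := by
      intro h0
      rw [h0] at h2
      simp at h2
      exact hne h2.symm
    have h3 := kuniv g hg0 (fun t => m (a + t • b) - i.degree)
      (fun t => kline_dvd a b t P i _ (hv _))
    rw [Polynomial.natDegree_mul (pow_ne_zero _ Polynomial.X_ne_zero) hg0,
      Polynomial.natDegree_X_pow] at h1
    have h4 : ∑ t : F, m (a + t • b) ≤ ∑ t : F, (m (a + t • b) - i.degree) + q * i.degree := by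
      have : q * i.degree = ∑ t : F, i.degree := by simp [hqdef]
      rw [this, ← Finset.sum_add_distrib]
      exact Finset.sum_le_sum fun t _ => by omega
    have h5 : q * i.degree ≤ D := by
      have : i.degree ≤ D / q := by omega
      exact (Nat.mul_le_mul_left q this).trans (Nat.mul_div_le D q)
    generalize ∑ t : F, m (a + t • b) = S at *
    generalize i.degree = e at *
    obtain ⟨r, hr⟩ : ∃ r, q = r + 1 := ⟨q - 1, by omega⟩
    rw [hr] at ha h4 h5
    have h6 : 2 * (r + 1) - 1 = 2 * r + 1 := by omega
    rw [h6] at ha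
    have h7 : S ≤ D + r * e := by
      have : (r + 1) * e = r * e + e := by ring
      omega
    have h8 : r * ((r + 1) * e) ≤ r * D := Nat.mul_le_mul_left _ h5
    have h9 : D * (2 * r + 1) ≤ d * (2 * r + 1) := Nat.mul_le_mul_right _ hPd
    nlinarith
  have hall : ∀ b, kvan H b (D / q + 1) := by
    intro b
    by_cases hb : b = 0
    · subst hb
      intro i hi
      rw [kshift_zero]
      by_cases hiD : i.degree = D
      · -- then D = 0
        have hD0 : D = 0 := by
          by_contra hne
          have := Nat.div_lt_self (Nat.pos_of_ne_zero hne) hq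
          omega
        rw [hD0] at hiD
        have hi0 : i = 0 := (Finsupp.degree_eq_zero_iff i).1 hiD
        subst hi0
        have hne : (fun _ => 1 : Fin n → F) ≠ 0 := by
          intro h0
          exact one_ne_zero (congr_fun h0 ⟨0, hn⟩)
        have h1 := hvan _ hne 0 hi
        have hHC : H = C (coeff 0 H) := by
          rw [← totalDegree_eq_zero_iff_eq_C]
          have := hHh.totalDegree_le
          omega
        rw [hHC] at h1
        simpa [kshift] using h1
      · exact hHh.coeff_eq_zero hiD
    · exact hvan b hb
  have h1 := ksz n H hH0 _ hall
  have h2 := hHh.totalDegree_le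
  have h3 := Nat.lt_mul_div_succ D (show 0 < q by omega)
  rw [← hqdef] at h1
  omega

lemma kreal {n : ℕ} (hn : 1 ≤ n) {F : Type*} [Field F] [Fintype F] (f : (Fin n → F) → ℝ)
    (hf : ∀ x, 0 ≤ f x) (K : ℝ) (hK : 0 < K)
    (hl : ∀ b : Fin n → F, b ≠ 0 → ∃ a, K ≤ ∑ t : F, f (a + t • b)) :
    K ^ n ≤ (2 - (Fintype.card F : ℝ)⁻¹) ^ n * ∑ x, f x ^ n := by
  have hq : 1 < Fintype.card F := Fintype.one_lt_card
  set q := Fintype.card F with hqdef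
  have hq' : (1 : ℝ) < q := by exact_mod_cast hq
  set c : ℝ := 2 - (q : ℝ)⁻¹ with hc
  have hqi : (q : ℝ)⁻¹ < 1 := inv_lt_one_of_one_lt₀ hq'
  have hcpos : 0 < c := by linarith
  have hcq : c * q = 2 * q - 1 := by
    rw [hc, sub_mul, inv_mul_cancel₀ (by linarith)]
  by_contra hcon
  push Not at hcon
  have h1 : ∑ x, f x ^ n < (K / c) ^ n := by
    rw [div_pow, lt_div_iff₀ (by positivity)]
    linarith
  -- choose the real degree parameter
  obtain ⟨D, hD0, hDK, hD⟩ : ∃ D : ℝ, 0 < D ∧ D < K / c ∧ ∑ x, f x ^ n < D ^ n := by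
    have hcont : Filter.Tendsto (fun x : ℝ => x ^ n) (nhdsWithin (K / c) (Set.Iio (K / c)))
        (nhds ((K / c) ^ n)) := ((continuous_pow n).tendsto _).mono_left nhdsWithin_le_nhds
    have e1 := hcont.eventually (lt_mem_nhds h1)
    have e2 : ∀ᶠ x in nhdsWithin (K / c) (Set.Iio (K / c)), 0 < x :=
      Filter.Eventually.filter_mono nhdsWithin_le_nhds (lt_mem_nhds (by positivity))
    have e3 : ∀ᶠ x in nhdsWithin (K / c) (Set.Iio (K / c)), x < K / c := self_mem_nhdsWithin
    obtain ⟨D, h1, h2, h3⟩ := (e1.and (e2.and e3)).exists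
    exact ⟨D, h2, h3, h1⟩
  -- choose the scaling parameter
  obtain ⟨N, hN1, hN⟩ : ∃ N : ℕ, 1 ≤ N ∧ ∑ x, (f x + ((n : ℝ) + 1) / N) ^ n < D ^ n := by
    have ht : Filter.Tendsto (fun N : ℕ => ∑ x, (f x + ((n : ℝ) + 1) / N) ^ n) Filter.atTop
        (nhds (∑ x, (f x + 0) ^ n)) := by
      refine tendsto_finsetSum _ fun x _ => ?_
      exact ((tendsto_const_nhds).add (tendsto_const_div_atTop_nhds_zero_nat _)).pow n
    simp only [add_zero] at ht
    have e1 := ht.eventually (gt_mem_nhds hD)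
    obtain ⟨N, h1, h2⟩ := (e1.and (Filter.eventually_ge_atTop 1)).exists
    exact ⟨N, h2, h1⟩
  have hNpos : (0 : ℝ) < N := by exact_mod_cast hN1
  refine kcore hn (fun x => ⌈(N : ℝ) * f x⌉₊) ⌊(N : ℝ) * D⌋₊ ?_ ?_
  · have hlt : (∑ x, ((kmon n ⌈(N : ℝ) * f x⌉₊).card : ℝ)) <
        ((kmon n (⌊(N : ℝ) * D⌋₊ + 1)).card : ℝ) := by
      refine lt_of_lt_of_le ?_ (le_card_kmon n _)
      refine lt_of_le_of_lt (Finset.sum_le_sum fun x _ => card_kmon_le n _) ?_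
      rw [← Finset.sum_div]
      apply div_lt_div_of_pos_right _ (by positivity)
      calc ∑ x, ((⌈(N : ℝ) * f x⌉₊ : ℝ) + n) ^ n
          ≤ ∑ x, ((N : ℝ) ^ n * (f x + ((n : ℝ) + 1) / N) ^ n) := by
            refine Finset.sum_le_sum fun x _ => ?_
            rw [← mul_pow, mul_add, mul_div_cancel₀ _ hNpos.ne']
            have := Nat.ceil_lt_add_one (mul_nonneg hNpos.le (hf x))
            gcongr ?_ ^ n
            linarith
        _ = (N : ℝ) ^ n * ∑ x, (f x + ((n : ℝ) + 1) / N) ^ n := by rw [Finset.mul_sum]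
        _ < (N : ℝ) ^ n * D ^ n := by gcongr
        _ = (N * D) ^ n := by rw [mul_pow]
        _ ≤ _ := by
            have := Nat.lt_floor_add_one ((N : ℝ) * D)
            gcongr
    exact_mod_cast hlt
  · intro b hb
    obtain ⟨a, ha⟩ := hl b hb
    refine ⟨a, ?_⟩
    rw [← hqdef]
    have h2 : N * K ≤ ∑ t : F, (⌈(N : ℝ) * f (a + t • b)⌉₊ : ℝ) := by
      calc N * K ≤ N * ∑ t : F, f (a + t • b) := by gcongr
        _ = ∑ t : F, N * f (a + t • b) := by rw [Finset.mul_sum]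
        _ ≤ _ := Finset.sum_le_sum fun t _ => Nat.le_ceil _
    have h3 : (⌊(N : ℝ) * D⌋₊ : ℝ) ≤ N * D := Nat.floor_le (by positivity)
    have h4 : D * c < K := (lt_div_iff₀ hcpos).1 hDK
    have h5 : ((2 * q - 1 : ℕ) : ℝ) = c * q := by
      rw [hcq, Nat.cast_sub (by omega)]; push_cast; rfl
    have h6 : ((⌊(N : ℝ) * D⌋₊ * (2 * q - 1) : ℕ) : ℝ) <
        ((q * ∑ t : F, ⌈(N : ℝ) * f (a + t • b)⌉₊ : ℕ) : ℝ) := by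
      rw [Nat.cast_mul, h5]
      push_cast
      calc (⌊(N : ℝ) * D⌋₊ : ℝ) * (c * q) ≤ (N * D) * (c * q) := by gcongr
        _ = q * (N * (D * c)) := by ring
        _ < q * (N * K) := by gcongr
        _ ≤ _ := by gcongr
    exact_mod_cast h6

/-- a surjection with kernel spanned by `b` -/
lemma kproj {n : ℕ} (hn : 1 ≤ n) {F : Type*} [Field F] (b : Fin n → F) (hb : b ≠ 0) :
    ∃ φ : (Fin n → F) →ₗ[F] (Fin (n - 1) → F), Function.Surjective φ ∧
      LinearMap.ker φ = Submodule.span F {b} := by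
  have h1 : Module.finrank F ((Fin n → F) ⧸ Submodule.span F {b}) =
      Module.finrank F (Fin (n - 1) → F) := by
    have := Submodule.finrank_quotient_add_finrank (Submodule.span F {b})
    rw [finrank_span_singleton hb] at this
    simp at this ⊢
    omega
  let e := LinearEquiv.ofFinrankEq _ _ h1
  refine ⟨e.toLinearMap.comp (Submodule.mkQ _), ?_, ?_⟩
  · exact e.surjective.comp (Submodule.mkQ_surjective _)
  · rw [LinearEquiv.ker_comp, Submodule.ker_mkQ]

lemma kmap {n : ℕ} {F : Type*} [Field F] [Fintype F] (R : PMF (Fin n → F)) (b a : Fin n → F)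
    (hb : b ≠ 0) (φ : (Fin n → F) →ₗ[F] (Fin (n - 1) → F))
    (hk : LinearMap.ker φ = Submodule.span F {b}) :
    ((R.map φ) (φ a)).toReal = ∑ t : F, (R (a + t • b)).toReal := by
  classical
  rw [PMF.map_apply, tsum_fintype, ENNReal.toReal_sum]
  · have hinj : Function.Injective (fun t : F => a + t • b) := by
      intro s t hst
      exact smul_left_injective F hb (add_left_cancel hst)
    rw [← Finset.sum_image (s := Finset.univ) (g := fun t : F => a + t • b)
      (f := fun x => (R x).toReal) (fun s _ t _ h => hinj h)]
    rw [← Finset.sum_filter_add_sum_filter_not Finset.univ (fun x => φ a = φ x)]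
    rw [Finset.sum_eq_zero (s := Finset.univ.filter (fun x => ¬ φ a = φ x)), add_zero]
    · refine Finset.sum_congr ?_ ?_
      · ext x
        simp only [Finset.mem_filter, Finset.mem_univ, true_and, Finset.mem_image]
        rw [eq_comm, ← sub_eq_zero, ← map_sub, ← LinearMap.mem_ker, hk,
          Submodule.mem_span_singleton]
        refine exists_congr fun t => ?_
        rw [eq_sub_iff_add_eq, add_comm]
      · intro x hx
        obtain ⟨t, _, rfl⟩ := Finset.mem_image.1 hx
        have : φ b = 0 := by
          rw [← LinearMap.mem_ker, hk]; exact Submodule.mem_span_singleton_self b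
        simp [this]
    · intro x hx
      rw [if_neg (Finset.mem_filter.1 hx).2]; rfl
  · intro x _
    split_ifs
    · exact R.apply_ne_top x
    · simp

/-- facts on the maximum of a pmf on a finite type -/
lemma ksup {α : Type*} [Fintype α] (p : PMF α) :
    (∃ w, (⨆ w : α, (p w).toReal) = (p w).toReal) ∧ 0 < (⨆ w : α, (p w).toReal) ∧
    (∀ w, (p w).toReal ≤ ⨆ w : α, (p w).toReal) ∧ ∑ w, (p w).toReal = 1 := by
  obtain ⟨w0, hw0⟩ := p.support_nonempty
  have : Nonempty α := ⟨w0⟩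
  have hle : ∀ w, (p w).toReal ≤ ⨆ w : α, (p w).toReal := fun w =>
    le_ciSup (f := fun w => (p w).toReal) (Set.finite_range _).bddAbove w
  obtain ⟨w, hw⟩ := exists_eq_ciSup_of_finite (f := fun w => (p w).toReal)
  refine ⟨⟨w, hw.symm⟩, ?_, hle, ?_⟩
  · exact lt_of_lt_of_le (ENNReal.toReal_pos ((PMF.mem_support_iff _ _).1 hw0)
      (p.apply_ne_top w0)) (hle w0)
  · rw [← ENNReal.toReal_sum (fun x _ => p.apply_ne_top x), ← tsum_fintype (L := .unconditional α), p.tsum_coe]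
    rfl

/-- Entropic Kakeya bound (`k = 1`): for any random variable `R` supported on `F_q^n`,
there is a surjective linear map `φ : F_q^n → F_q^{n−1}` with
`H_∞^q(φ(R)) ≥ ((n−1)/n)·H_∞^q(R) − log_q(2 − q^{-1})`. -/
theorem entropic_kakeya {F : Type*} [Field F] [Fintype F] (q n : ℕ)
    (hq : Fintype.card F = q) (hn : 1 ≤ n) (R : PMF (Fin n → F)) :
    ∃ φ : (Fin n → F) →ₗ[F] (Fin (n - 1) → F), Function.Surjective φ ∧
      ((n : ℝ) - 1) / n * minEntropy q R - Real.logb q (2 - (q : ℝ)⁻¹) ≤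
        minEntropy q (R.map φ) := by
  classical
  by_contra hcon
  push Not at hcon
  subst hq
  have hq : 1 < Fintype.card F := Fintype.one_lt_card
  have hq' : (1 : ℝ) < (Fintype.card F : ℝ) := by exact_mod_cast hq
  have hqi : (Fintype.card F : ℝ)⁻¹ < 1 := inv_lt_one_of_one_lt₀ hq'
  obtain ⟨-, hMpos, hMle, hsum⟩ := ksup R
  set M := ⨆ w, (R w).toReal with hM
  set c : ℝ := 2 - (Fintype.card F : ℝ)⁻¹ with hc
  have hcpos : 0 < c := by linarith
  have hline : ∀ b : {b : Fin n → F // b ≠ 0}, ∃ a,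
      c * M ^ (((n : ℝ) - 1) / n) < ∑ t : F, (R (a + t • b.1)).toReal := by
    rintro ⟨b, hb⟩
    obtain ⟨φ, hφ, hk⟩ := kproj hn b hb
    have h1 := hcon φ hφ
    obtain ⟨⟨v, hv⟩, hSpos, -, -⟩ := ksup (R.map φ)
    obtain ⟨a, rfl⟩ := hφ v
    refine ⟨a, ?_⟩
    rw [← kmap R b a hb φ hk, ← hv]
    unfold minEntropy at h1
    rw [← hM] at h1
    rw [← Real.logb_lt_logb_iff hq' (by positivity) hSpos,
      Real.logb_mul hcpos.ne' (by positivity), Real.logb_rpow_eq_mul_logb_of_pos hMpos]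
    linarith
  choose A hA using hline
  have hne : Nonempty {b : Fin n → F // b ≠ 0} :=
    ⟨⟨fun _ => 1, fun h0 => one_ne_zero (congr_fun h0 ⟨0, hn⟩)⟩⟩
  obtain ⟨b0, hb0⟩ := Finite.exists_min (fun b => ∑ t : F, (R (A b + t • b.1)).toReal)
  set K := ∑ t : F, (R (A b0 + t • b0.1)).toReal with hK
  have hKlt : c * M ^ (((n : ℝ) - 1) / n) < K := hA b0
  have hKpos : 0 < K := lt_trans (by positivity) hKlt
  have h1 := kreal hn (fun x => (R x).toReal) (fun x => ENNReal.toReal_nonneg) K hKpos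
    (fun b hb => ⟨A ⟨b, hb⟩, hb0 ⟨b, hb⟩⟩)
  have h2 : ∑ x, (R x).toReal ^ n ≤ M ^ (n - 1) := by
    calc ∑ x, (R x).toReal ^ n ≤ ∑ x, M ^ (n - 1) * (R x).toReal := by
          refine Finset.sum_le_sum fun x _ => ?_
          obtain ⟨k, rfl⟩ : ∃ k, n = k + 1 := ⟨n - 1, by omega⟩
          rw [pow_succ, Nat.add_sub_cancel]
          have := hMle x
          gcongr
      _ = M ^ (n - 1) := by rw [← Finset.mul_sum, hsum, mul_one]
  have h3 : (c * M ^ (((n : ℝ) - 1) / n)) ^ n < K ^ n := by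
    have : n ≠ 0 := by omega
    gcongr
  have h4 : (M ^ (((n : ℝ) - 1) / n)) ^ n = M ^ (n - 1) := by
    rw [← Real.rpow_natCast, ← Real.rpow_mul hMpos.le, div_mul_cancel₀ _ (by positivity),
      ← Real.rpow_natCast, Nat.cast_sub hn, Nat.cast_one]
  rw [mul_pow, h4] at h3
  have h5 : c ^ n * ∑ x, (R x).toReal ^ n ≤ c ^ n * M ^ (n - 1) := by gcongr
  linarith
end

section
/- (Entropic Furstenberg bound) For any random variable R supported on F_q^n and any 1 ≤ k < n, there exists a surjective linear map φ: F_q^n → F_q^{n−k} such that H_∞^q(φ(R)) ≥ ((n−k)/n)·H_∞^q(R) − k·log_q(2 − q^{-1}). -/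
open MvPolynomial in
noncomputable def shiftHom {F A : Type*} [CommRing F] [CommRing A] [Algebra F A] {n : ℕ}
    (c : Fin n → A) : MvPolynomial (Fin n) F →ₐ[F] MvPolynomial (Fin n) A :=
  aeval (fun i => X i + C (c i))

open MvPolynomial in
lemma coeff_prod_shift {A : Type*} [CommRing A] {n : ℕ}
    (c : Fin n → A) (α β : Fin n →₀ ℕ) :
    coeff α (∏ i, (X i + C (c i)) ^ β i : MvPolynomial (Fin n) A)
      = ∏ i, (((β i).choose (α i) : ℕ) : A) * c i ^ (β i - α i) := by
  classical
  simp_rw [add_pow]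
  rw [Finset.prod_univ_sum, coeff_sum]
  have h : ∀ x : Fin n → ℕ, (∏ i, (X i ^ x i * C (c i) ^ (β i - x i) * ((β i).choose (x i) : MvPolynomial (Fin n) A)))
      = monomial (Finsupp.equivFunOnFinite.symm x) (∏ i, (((β i).choose (x i) : ℕ) : A) * c i ^ (β i - x i)) := by
    intro x
    rw [monomial_eq, Finsupp.prod_fintype _ _ (by simp), map_prod, ← Finset.prod_mul_distrib]
    refine Finset.prod_congr rfl fun i _ => ?_
    simp only [map_mul, map_pow, map_natCast, Finsupp.equivFunOnFinite_symm_apply_apply]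
    ring
  simp_rw [h, coeff_monomial]
  have h2 : ∀ x : Fin n → ℕ, (Finsupp.equivFunOnFinite.symm x = α) ↔ x = ⇑α := by
    intro x
    constructor
    · rintro rfl; rfl
    · rintro rfl; ext; rfl
  simp_rw [h2]
  rw [Finset.sum_ite_eq']
  split_ifs with hm
  · rfl
  · simp only [Fintype.mem_piFinset, Finset.mem_range, not_forall, not_lt] at hm
    obtain ⟨i, hi⟩ := hm
    symm
    apply Finset.prod_eq_zero (Finset.mem_univ i)
    rw [Nat.choose_eq_zero_of_lt (by omega)]; simp

open MvPolynomial in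
lemma coeff_shift_monomial {F A : Type*} [CommRing F] [CommRing A] [Algebra F A] {n : ℕ}
    (c : Fin n → A) (α β : Fin n →₀ ℕ) (b : F) :
    coeff α (shiftHom c (monomial β b))
      = algebraMap F A b * ∏ i, (((β i).choose (α i) : ℕ) : A) * c i ^ (β i - α i) := by
  rw [← coeff_prod_shift, shiftHom, aeval_monomial, Finsupp.prod_fintype _ _ (by simp),
    MvPolynomial.algebraMap_apply, coeff_C_mul]

open MvPolynomial in
lemma coeff_shift {F A : Type*} [CommRing F] [CommRing A] [Algebra F A] {n : ℕ}
    (c : Fin n → A) (α : Fin n →₀ ℕ) (P : MvPolynomial (Fin n) F) :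
    coeff α (shiftHom c P)
      = ∑ β ∈ P.support, algebraMap F A (coeff β P) *
          ∏ i, (((β i).choose (α i) : ℕ) : A) * c i ^ (β i - α i) := by
  conv_lhs => rw [P.as_sum, map_sum, coeff_sum]
  exact Finset.sum_congr rfl fun β _ => coeff_shift_monomial c α β _

/-- univariate fact -/
lemma sum_le_natDegree_of_dvd {F : Type*} [Field F] [Fintype F] (g : Polynomial F) (hg : g ≠ 0)
    (k : F → ℕ) (h : ∀ t, ∀ b < k t, (Polynomial.taylor t g).coeff b = 0) :
    ∑ t, k t ≤ g.natDegree := by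
  classical
  have h1 : ∀ t, k t ≤ g.rootMultiplicity t := by
    intro t
    rw [Polynomial.rootMultiplicity_eq_natTrailingDegree]
    have hne : g.comp (Polynomial.X + Polynomial.C t) ≠ 0 := by
      have := (Polynomial.taylor_injective t).ne hg
      simpa [Polynomial.taylor_apply] using this
    apply Polynomial.le_natTrailingDegree hne
    intro b hb
    simpa [Polynomial.taylor_apply] using h t b hb
  calc ∑ t, k t ≤ ∑ t, g.roots.count t := Finset.sum_le_sum fun t _ => by
        rw [Polynomial.count_roots]; exact h1 t
    _ = Multiset.card g.roots := Multiset.sum_count_eq_card (by simp)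
    _ ≤ _ := Polynomial.card_roots' g

lemma exists_taylor_ne {F : Type*} [Field F] [Fintype F] (g : Polynomial F) (hg : g ≠ 0) :
    ∃ (v : F) (a : ℕ), Fintype.card F * a ≤ g.natDegree ∧ (Polynomial.taylor v g).coeff a ≠ 0 := by
  by_contra! hcon
  set q := Fintype.card F with hq
  have hq0 : 0 < q := Fintype.card_pos
  have := sum_le_natDegree_of_dvd g hg (fun _ => g.natDegree / q + 1) (by
    intro t b hb
    apply hcon
    have : b ≤ g.natDegree / q := by omega
    calc q * b ≤ q * (g.natDegree / q) := Nat.mul_le_mul_left _ this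
      _ ≤ _ := Nat.mul_div_le _ _)
  simp only [Finset.sum_const, Finset.card_univ, smul_eq_mul, ← hq] at this
  have h2 := Nat.lt_mul_div_succ g.natDegree hq0
  omega

open MvPolynomial in
noncomputable def slicePoly {F : Type*} [Field F] {n : ℕ} (v : Fin n → F) (α : Fin n →₀ ℕ)
    (Q : MvPolynomial (Fin (n+1)) F) : Polynomial F :=
  ∑ j ∈ (finSuccEquiv F n Q).support, Polynomial.monomial j (coeff α (shiftHom v ((finSuccEquiv F n Q).coeff j)))

open MvPolynomial in
lemma slicePoly_coeff {F : Type*} [Field F] {n : ℕ} (v : Fin n → F) (α : Fin n →₀ ℕ)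
    (Q : MvPolynomial (Fin (n+1)) F) (j : ℕ) : (slicePoly v α Q).coeff j =
    coeff α (shiftHom v ((finSuccEquiv F n Q).coeff j)) := by
  simp only [slicePoly, Polynomial.finsetSum_coeff, Polynomial.coeff_monomial, Finset.sum_ite_eq']
  split_ifs with h
  · rfl
  · rw [Polynomial.notMem_support_iff.1 h]; simp

open MvPolynomial in
lemma slicePoly_taylor {F : Type*} [Field F] {n : ℕ} (v : Fin n → F) (α : Fin n →₀ ℕ)
    (Q : MvPolynomial (Fin (n+1)) F) (v0 : F) (a : ℕ) :
    (Polynomial.taylor v0 (slicePoly v α Q)).coeff a =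
      coeff (α.cons a) (shiftHom (Fin.cons v0 v : Fin (n+1) → F) Q) := by
  induction Q using MvPolynomial.induction_on' with
  | add p q hp hq =>
    have : slicePoly v α (p + q) = slicePoly v α p + slicePoly v α q := by
      ext j; simp [slicePoly_coeff]
    rw [this]; simp [hp, hq]
  | monomial β b =>
    have hs : slicePoly v α (monomial β b) = Polynomial.monomial (β 0)
        (coeff α (shiftHom v (monomial β.tail b))) := by
      ext j
      rw [slicePoly_coeff, Polynomial.coeff_monomial]
      have : (finSuccEquiv F n (monomial β b)).coeff j = if β 0 = j then monomial β.tail b else 0 := by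
        ext m
        rw [finSuccEquiv_coeff_coeff, coeff_monomial]
        by_cases h : β 0 = j
        · subst h
          rw [if_pos rfl, coeff_monomial]
          congr 1
          apply propext
          constructor
          · rintro h; rw [h]; simp
          · rintro rfl; simp
        · rw [if_neg h, if_neg]
          · simp
          · rintro rfl; simp at h
      rw [this]
      split_ifs <;> simp
    rw [hs, coeff_shift_monomial, coeff_shift_monomial, Fin.prod_univ_succ, Polynomial.taylor_monomial,
      Polynomial.coeff_C_mul, Polynomial.coeff_X_add_C_pow]
    simp [Finsupp.tail_apply]
    ring

open MvPolynomial in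
/-- multiplicity Schwartz–Zippel -/
lemma exists_shift_ne {F : Type*} [Field F] [Fintype F] (n : ℕ) : ∀ (Q : MvPolynomial (Fin n) F), Q ≠ 0 →
    ∃ (v : Fin n → F) (α : Fin n →₀ ℕ), Fintype.card F * α.degree ≤ Q.totalDegree ∧
      coeff α (shiftHom v Q) ≠ 0 := by
  induction n with
  | zero =>
    intro Q hQ
    refine ⟨0, 0, by simp, ?_⟩
    rw [MvPolynomial.ne_zero_iff] at hQ
    obtain ⟨d, hd⟩ := hQ
    have : d = 0 := Subsingleton.elim _ _
    subst this
    have : shiftHom (0 : Fin 0 → F) = AlgHom.id F (MvPolynomial (Fin 0) F) := by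
      ext i; exact i.elim0
    rw [this]; simpa using hd
  | succ n ih =>
    intro Q hQ
    set f := finSuccEquiv F n Q with hf
    have hf0 : f ≠ 0 := by simpa [hf] using hQ
    obtain ⟨v, α, h1, h2⟩ := ih (f.coeff f.natDegree) (by simpa using hf0)
    set g := slicePoly v α Q with hg
    have hg0 : g ≠ 0 := by
      intro h
      apply h2
      rw [hf, ← slicePoly_coeff, ← hf, ← hg, h, Polynomial.coeff_zero]
    have hgd : g.natDegree ≤ f.natDegree := by
      rw [Polynomial.natDegree_le_iff_coeff_eq_zero]
      intro j hj
      rw [hg, slicePoly_coeff, ← hf, Polynomial.coeff_eq_zero_of_natDegree_lt hj]; simp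
    obtain ⟨v0, a, h3, h4⟩ := exists_taylor_ne g hg0
    refine ⟨Fin.cons v0 v, α.cons a, ?_, ?_⟩
    · have h5 := totalDegree_coeff_finSuccEquiv_add_le Q f.natDegree (by
        rw [← hf]; simpa using hf0)
      rw [← hf] at h5
      have : (α.cons a).degree = a + α.degree := by
        simp [Finsupp.degree_eq_sum, Fin.sum_univ_succ]
      rw [this, mul_add]; omega
    · rw [← slicePoly_taylor]; exact h4

lemma coeff_prod_sum_deg {ι F : Type*} [CommRing F] (s : Finset ι) (f : ι → Polynomial F) (e : ι → ℕ)
    (h : ∀ i ∈ s, (f i).natDegree ≤ e i) :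
    (∏ i ∈ s, f i).natDegree ≤ ∑ i ∈ s, e i ∧
    (∏ i ∈ s, f i).coeff (∑ i ∈ s, e i) = ∏ i ∈ s, (f i).coeff (e i) := by
  classical
  induction s using Finset.induction_on with
  | empty => simp
  | insert i s hi ih =>
    have ih := ih fun j hj => h j (Finset.mem_insert_of_mem hj)
    have h0 := h i (Finset.mem_insert_self _ _)
    rw [Finset.prod_insert hi, Finset.sum_insert hi, Finset.prod_insert hi]
    refine ⟨Polynomial.natDegree_mul_le.trans (by omega), ?_⟩
    rw [Polynomial.coeff_mul_add_eq_of_natDegree_le h0 ih.1, ih.2]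

lemma exp_cases {n : ℕ} (α β : Fin n →₀ ℕ) :
    (∃ i, β i < α i) ∨ (∑ i, (β i - α i)) + α.degree = β.degree := by
  by_cases h : ∃ i, β i < α i
  · exact Or.inl h
  · right
    push Not at h
    rw [Finsupp.degree_eq_sum, Finsupp.degree_eq_sum, ← Finset.sum_add_distrib]
    exact Finset.sum_congr rfl fun i _ => Nat.sub_add_cancel (h i)

lemma prod_choose_zero {A : Type*} [CommRing A] {n : ℕ} (α β : Fin n →₀ ℕ) (h : ∃ i, β i < α i)
    (c : Fin n → A) : ∏ i, (((β i).choose (α i) : ℕ) : A) * c i ^ (β i - α i) = 0 := by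
  obtain ⟨i, hi⟩ := h
  apply Finset.prod_eq_zero (Finset.mem_univ i)
  rw [Nat.choose_eq_zero_of_lt hi]; simp

open MvPolynomial in
noncomputable def linePoly {F : Type*} [Field F] {n : ℕ} (a v : Fin n → F) (α : Fin n →₀ ℕ)
    (P : MvPolynomial (Fin n) F) : Polynomial F :=
  coeff α (shiftHom (fun i => Polynomial.C (a i) + Polynomial.X * Polynomial.C (v i)) P)

open MvPolynomial in
lemma linePoly_term {F : Type*} [Field F] {n : ℕ} (a v : Fin n → F) (α β : Fin n →₀ ℕ) (d : ℕ)
    (hd : β.degree ≤ d) :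
    (∏ i, (((β i).choose (α i) : ℕ) : Polynomial F) *
      (Polynomial.C (a i) + Polynomial.X * Polynomial.C (v i)) ^ (β i - α i)).natDegree ≤ d - α.degree ∧
    (∏ i, (((β i).choose (α i) : ℕ) : Polynomial F) *
      (Polynomial.C (a i) + Polynomial.X * Polynomial.C (v i)) ^ (β i - α i)).coeff (d - α.degree) =
      if β.degree = d then ∏ i, (((β i).choose (α i) : ℕ) : F) * v i ^ (β i - α i) else 0 := by
  rcases exp_cases α β with h | h
  · rw [prod_choose_zero α β h, prod_choose_zero α β h]; simp
  · have hlin : ∀ i, (Polynomial.C (a i) + Polynomial.X * Polynomial.C (v i)).natDegree ≤ 1 := by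
      intro i; compute_degree
    have hpow : ∀ i (k : ℕ), ((Polynomial.C (a i) + Polynomial.X * Polynomial.C (v i)) ^ k).natDegree ≤ k := by
      intro i k
      calc _ ≤ k * 1 := Polynomial.natDegree_pow_le_of_le k (hlin i)
        _ = k := by simp
    have key := coeff_prod_sum_deg Finset.univ (fun i => (((β i).choose (α i) : ℕ) : Polynomial F) *
      (Polynomial.C (a i) + Polynomial.X * Polynomial.C (v i)) ^ (β i - α i)) (fun i => β i - α i) (by
        intro i _
        refine Polynomial.natDegree_mul_le.trans ?_
        rw [Polynomial.natDegree_natCast, zero_add]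
        exact hpow _ _)
    refine ⟨key.1.trans (by omega), ?_⟩
    split_ifs with hb
    · have : d - α.degree = ∑ i, (β i - α i) := by omega
      rw [this, key.2]
      refine Finset.prod_congr rfl fun i _ => ?_
      rw [← Polynomial.C_eq_natCast, Polynomial.coeff_C_mul]
      congr 1
      have := Polynomial.coeff_pow_of_natDegree_le (m := β i - α i) (hlin i)
      rw [mul_one] at this
      rw [this]; simp
    · exact Polynomial.coeff_eq_zero_of_natDegree_lt (lt_of_le_of_lt key.1 (by omega))

open MvPolynomial in
lemma linePoly_natDegree {F : Type*} [Field F] {n : ℕ} (a v : Fin n → F) (α : Fin n →₀ ℕ)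
    (P : MvPolynomial (Fin n) F) (d : ℕ) (hd : P.totalDegree ≤ d) :
    (linePoly a v α P).natDegree ≤ d - α.degree := by
  rw [linePoly, coeff_shift]
  apply Polynomial.natDegree_sum_le_of_forall_le
  intro β hβ
  rw [Polynomial.algebraMap_eq]
  exact (Polynomial.natDegree_C_mul_le _ _).trans
    (linePoly_term a v α β d ((le_totalDegree hβ).trans hd)).1

open MvPolynomial in
lemma linePoly_coeff {F : Type*} [Field F] {n : ℕ} (a v : Fin n → F) (α : Fin n →₀ ℕ)
    (P : MvPolynomial (Fin n) F) (d : ℕ) (hd : P.totalDegree ≤ d) :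
    (linePoly a v α P).coeff (d - α.degree) = coeff α (shiftHom v (homogeneousComponent d P)) := by
  rw [linePoly, coeff_shift, homogeneousComponent_apply, map_sum, coeff_sum, Polynomial.finsetSum_coeff,
    Finset.sum_filter]
  refine Finset.sum_congr rfl fun β hβ => ?_
  rw [Polynomial.algebraMap_eq, Polynomial.coeff_C_mul,
    (linePoly_term a v α β d ((le_totalDegree hβ).trans hd)).2, coeff_shift_monomial]
  split_ifs <;> simp

open MvPolynomial in
lemma linePoly_taylor {F : Type*} [Field F] {n : ℕ} (a v : Fin n → F) (α : Fin n →₀ ℕ)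
    (P : MvPolynomial (Fin n) F) (t : F) :
    Polynomial.taylor t (linePoly a v α P) = linePoly (a + t • v) v α P := by
  rw [← Polynomial.coe_taylorAlgHom, linePoly, linePoly, coeff_shift, coeff_shift]
  simp only [LinearMap.coe_coe, map_sum, map_mul, map_prod, map_pow, map_natCast]
  refine Finset.sum_congr rfl fun β hβ => ?_
  congr 1
  · simp
  refine Finset.prod_congr rfl fun i _ => ?_
  congr 2
  simp
  ring

open MvPolynomial in
lemma shiftHom_shiftHom {F A : Type*} [Field F] [CommRing A] [Algebra F A] {n : ℕ} (x : Fin n → F)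
    (c : Fin n → A) (P : MvPolynomial (Fin n) F) :
    shiftHom c (shiftHom x P) = shiftHom (fun i => algebraMap F A (x i) + c i) P := by
  have h1 : ∀ r : F, shiftHom c (C r) = (C (algebraMap F A r) : MvPolynomial (Fin n) A) := by
    intro r
    rw [shiftHom, aeval_C, MvPolynomial.algebraMap_apply]
  have h2 : ∀ i, shiftHom c (X i : MvPolynomial (Fin n) F) = X i + C (c i) := by
    intro i
    rw [shiftHom, aeval_X]
  have h : (shiftHom c).comp (shiftHom x) = shiftHom (F := F) (fun i => algebraMap F A (x i) + c i) := by
    apply MvPolynomial.algHom_ext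
    intro i
    have h3 : shiftHom x (X i : MvPolynomial (Fin n) F) = X i + C (x i) := by
      rw [shiftHom, aeval_X]
    rw [AlgHom.comp_apply, h3, map_add, h1, h2, shiftHom, aeval_X, C_add]
    ring
  rw [← h, AlgHom.comp_apply]

open MvPolynomial in
lemma linePoly_vanish {F : Type*} [Field F] {n : ℕ} (x v : Fin n → F) (α : Fin n →₀ ℕ)
    (P : MvPolynomial (Fin n) F) (m : ℕ)
    (h : ∀ γ : Fin n →₀ ℕ, γ.degree < m → coeff γ (shiftHom x P) = 0) (b : ℕ) (hb : b < m - α.degree) :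
    (linePoly x v α P).coeff b = 0 := by
  have h1 : (shiftHom (fun i => Polynomial.C (x i) + Polynomial.X * Polynomial.C (v i)) P) =
      shiftHom (fun i => Polynomial.X * Polynomial.C (v i)) (shiftHom x P) := by
    rw [shiftHom_shiftHom]; rfl
  rw [linePoly, h1, coeff_shift, Polynomial.finsetSum_coeff]
  refine Finset.sum_eq_zero fun β hβ => ?_
  rw [Polynomial.algebraMap_eq, Polynomial.coeff_C_mul]
  rcases exp_cases α β with h2 | h2
  · rw [prod_choose_zero α β h2]; simp
  · have hm : m ≤ β.degree := by
      by_contra hlt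
      exact (mem_support_iff.1 hβ) (h β (by omega))
    have hdvd : (Polynomial.X : Polynomial F) ^ (∑ i, (β i - α i)) ∣ (∏ i, (((β i).choose (α i) : ℕ) : Polynomial F) *
      (Polynomial.X * Polynomial.C (v i)) ^ (β i - α i)) := by
      rw [← Finset.prod_pow_eq_pow_sum]
      apply Finset.prod_dvd_prod_of_dvd
      intro i _
      rw [mul_pow]
      exact Dvd.dvd.mul_left (dvd_mul_right _ _) _
    rw [Polynomial.X_pow_dvd_iff.1 hdvd b (by omega), mul_zero]

open MvPolynomial in
/-- Key combinatorial statement from a polynomial. -/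
lemma exists_direction_of_poly {F : Type*} [Field F] [Fintype F] {n : ℕ} (hn : 0 < n)
    (P : MvPolynomial (Fin n) F) (hP : P ≠ 0) (m : (Fin n → F) → ℕ)
    (h : ∀ x, ∀ γ : Fin n →₀ ℕ, γ.degree < m x → coeff γ (shiftHom x P) = 0) :
    ∃ v : Fin n → F, v ≠ 0 ∧ ∀ a, Fintype.card F * ∑ t : F, m (a + t • v) ≤
      (2 * Fintype.card F - 1) * P.totalDegree := by
  set q := Fintype.card F with hq
  have hq2 : 2 ≤ q := Fintype.one_lt_card
  set d := P.totalDegree with hd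
  set Q := homogeneousComponent d P with hQ
  have hQ0 : Q ≠ 0 := by
    obtain ⟨β, hβ, hβd⟩ := Finset.exists_mem_eq_sup P.support (support_nonempty.2 hP)
      (fun s => s.sum fun _ e => e)
    have hβd' : β.degree = d := hβd.symm
    intro h0
    apply mem_support_iff.1 hβ
    have := coeff_homogeneousComponent d P β
    rw [← hQ, h0, if_pos hβd'] at this
    simpa using this.symm
  have hQd : Q.totalDegree ≤ d := (homogeneousComponent_isHomogeneous d P).totalDegree_le
  have hex : ∃ (v : Fin n → F) (α : Fin n →₀ ℕ), v ≠ 0 ∧ q * α.degree ≤ d ∧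
      coeff α (shiftHom v Q) ≠ 0 := by
    obtain ⟨v, α, h1, h2⟩ := exists_shift_ne n Q hQ0
    by_cases hv : v = 0
    · subst hv
      have hid : shiftHom (0 : Fin n → F) = AlgHom.id F (MvPolynomial (Fin n) F) := by
        ext1 i; simp [shiftHom]
      rw [hid, AlgHom.id_apply] at h2
      have h3 : α.degree = d := by
        by_contra hne
        apply h2
        rw [hQ, coeff_homogeneousComponent, if_neg hne]
      have hd0 : d = 0 := by
        have : q * d ≤ d := by
          have := h1.trans hQd
          rwa [h3] at this
        nlinarith
      have hα : α = 0 := by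
        rw [hd0] at h3; exact (Finsupp.degree_eq_zero_iff α).1 h3
      refine ⟨fun _ => 1, 0, ?_, by simp, ?_⟩
      · intro h0; exact one_ne_zero (congrFun h0 ⟨0, hn⟩)
      · have : Q = C (coeff 0 Q) := by
          apply totalDegree_eq_zero_iff_eq_C.1; omega
        rw [this]
        rw [hα] at h2
        simpa [shiftHom] using h2
    · exact ⟨v, α, hv, h1.trans hQd, h2⟩
  obtain ⟨v, α, hv, h1, h2⟩ := hex
  refine ⟨v, hv, fun a => ?_⟩
  set g := linePoly a v α P with hg
  have hg0 : g ≠ 0 := by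
    intro h0
    apply h2
    rw [hQ, ← linePoly_coeff a v α P d le_rfl, ← hg, h0]; simp
  have h3 := sum_le_natDegree_of_dvd g hg0 (fun t => m (a + t • v) - α.degree) (by
    intro t b hb
    rw [hg, linePoly_taylor]
    exact linePoly_vanish _ _ _ _ _ (h _) b hb)
  have h4 : g.natDegree ≤ d - α.degree := linePoly_natDegree a v α P d le_rfl
  have h3 : ∑ t : F, (m (a + t • v) - α.degree) ≤ d - α.degree := h3.trans h4
  have h5 : ∑ t : F, m (a + t • v) ≤ ∑ t : F, (m (a + t • v) - α.degree) + q * α.degree := by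
    have : q * α.degree = ∑ t : F, α.degree := by simp [hq]
    rw [this, ← Finset.sum_add_distrib]
    exact Finset.sum_le_sum fun t _ => by omega
  have h6 : α.degree ≤ d := by nlinarith
  have h7 : ∑ t : F, m (a + t • v) + α.degree ≤ d + q * α.degree := by omega
  obtain ⟨r, hr⟩ : ∃ r, q = r + 1 := ⟨q - 1, by omega⟩
  have h8 : 2 * q - 1 = 2 * r + 1 := by omega
  rw [h8, hr]
  rw [hr] at h7 h1
  nlinarith

/-- exponents of degree `< m` -/
noncomputable def expSet (n m : ℕ) : Finset (Fin n →₀ ℕ) :=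
  (Finset.range m).biUnion (fun j => Finset.univ.finsuppAntidiag j)

lemma mem_expSet {n m : ℕ} (α : Fin n →₀ ℕ) : α ∈ expSet n m ↔ α.degree < m := by
  simp [expSet, Finset.mem_finsuppAntidiag, Finsupp.degree_eq_sum]

lemma card_expSet (n m : ℕ) (hn : 0 < n) : n.factorial * (expSet n m).card = m.ascFactorial n := by
  obtain ⟨k, rfl⟩ : ∃ k, n = k + 1 := ⟨n - 1, by omega⟩
  rw [expSet, Finset.card_biUnion]
  · simp_rw [Finset.card_finsuppAntidiag_nat_eq_choose]
    simp only [Finset.card_univ, Fintype.card_fin]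
    rcases m with _ | m
    · simp [Nat.zero_ascFactorial]
    · have := Nat.sum_range_add_choose m k
      have h2 : ∀ j, (k + 1 + j - 1).choose j = (j + k).choose k := by
        intro j
        rw [show k + 1 + j - 1 = j + k by omega, Nat.choose_symm_add]
      simp_rw [h2]
      rw [this, Nat.ascFactorial_eq_factorial_mul_choose]
      rfl
  · intro i _ j _ hij
    simp only [Function.onFun]
    rw [Finset.disjoint_left]
    intro x hx hy
    rw [Finset.mem_finsuppAntidiag] at hx hy
    exact hij (hx.1.symm.trans hy.1)

open MvPolynomial in
lemma exists_poly {F : Type*} [Field F] [Fintype F] {n : ℕ} (hn : 0 < n) (m : (Fin n → F) → ℕ) (D : ℕ)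
    (hD : ∑ x, (m x + n) ^ n < (D + 1) ^ n) :
    ∃ P : MvPolynomial (Fin n) F, P ≠ 0 ∧ P.totalDegree ≤ D ∧
      ∀ x, ∀ γ : Fin n →₀ ℕ, γ.degree < m x → coeff γ (shiftHom x P) = 0 := by
  classical
  have hcard : ∑ x : Fin n → F, (expSet n (m x)).card < (expSet n (D + 1)).card := by
    apply lt_of_mul_lt_mul_left (a := n.factorial) _ (Nat.zero_le _)
    rw [Finset.mul_sum]
    simp_rw [card_expSet n _ hn]
    refine lt_of_le_of_lt (Finset.sum_le_sum fun x _ => ?_) (hD.trans_le (Nat.pow_succ_le_ascFactorial _ _))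
    rcases Nat.eq_zero_or_pos (m x) with h | h
    · rw [h]; obtain ⟨k, rfl⟩ : ∃ k, n = k + 1 := ⟨n - 1, by omega⟩
      simp [Nat.zero_ascFactorial]
    · exact (Nat.ascFactorial_le n (Nat.le_succ _)).trans (Nat.ascFactorial_le_pow_add _ _)
  let Ψ : (expSet n (D + 1) → F) →ₗ[F] MvPolynomial (Fin n) F :=
    ∑ s : expSet n (D + 1), (monomial s.1) ∘ₗ (LinearMap.proj s)
  let Φ : (expSet n (D + 1) → F) →ₗ[F] ((Σ x : Fin n → F, expSet n (m x)) → F) :=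
    LinearMap.pi fun p => (lcoeff F p.2.1) ∘ₗ (shiftHom p.1).toLinearMap ∘ₗ Ψ
  have hker : LinearMap.ker Φ ≠ ⊥ := by
    apply LinearMap.ker_ne_bot_of_finrank_lt
    simpa using hcard
  obtain ⟨c, hc, hc0⟩ := (Submodule.ne_bot_iff _).1 hker
  have hΨ : ∀ β, coeff β (Ψ c) = if h : β ∈ expSet n (D + 1) then c ⟨β, h⟩ else 0 := by
    intro β
    simp only [Ψ, LinearMap.sum_apply, LinearMap.comp_apply, LinearMap.proj_apply, coeff_sum, coeff_monomial]
    split_ifs with h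
    · rw [Finset.sum_eq_single ⟨β, h⟩]
      · simp
      · intro b _ hb; rw [if_neg]; intro h'; exact hb (Subtype.ext h')
      · simp
    · apply Finset.sum_eq_zero
      intro b _
      rw [if_neg]; rintro rfl; exact h b.2
  refine ⟨Ψ c, ?_, ?_, ?_⟩
  · intro h0
    apply hc0
    ext s
    have := hΨ s.1
    rw [h0, dif_pos s.2] at this
    simpa using this.symm
  · apply Finset.sup_le
    intro β hβ
    have h1 := mem_support_iff.1 hβ
    rw [hΨ] at h1
    have h2 : β ∈ expSet n (D + 1) := by
      by_contra h3
      rw [dif_neg h3] at h1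
      exact h1 rfl
    exact Nat.lt_succ_iff.1 ((mem_expSet β).1 h2)
  · intro x γ hγ
    have := congrFun (LinearMap.mem_ker.1 hc) ⟨x, ⟨γ, (mem_expSet γ).2 hγ⟩⟩
    simpa [Φ] using this

lemma exists_direction_nat {F : Type*} [Field F] [Fintype F] {n : ℕ} (hn : 0 < n) (m : (Fin n → F) → ℕ) (D : ℕ)
    (hD : ∑ x, (m x + n) ^ n < (D + 1) ^ n) :
    ∃ v : Fin n → F, v ≠ 0 ∧ ∀ a, Fintype.card F * ∑ t : F, m (a + t • v) ≤
      (2 * Fintype.card F - 1) * D := by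
  obtain ⟨P, hP, hPD, h⟩ := exists_poly hn m D hD
  obtain ⟨v, hv, hv2⟩ := exists_direction_of_poly hn P hP m h
  exact ⟨v, hv, fun a => (hv2 a).trans (Nat.mul_le_mul_left _ hPD)⟩

lemma exists_direction_strict {F : Type*} [Field F] [Fintype F] {n : ℕ} (hn : 0 < n)
    (f : (Fin n → F) → ℝ) (hf : ∀ x, 0 ≤ f x) (δ : ℝ) (hδ : 0 < δ) (h : ∑ x, f x ^ n < δ ^ n) :
    ∃ v : Fin n → F, v ≠ 0 ∧ ∀ a, ∑ t : F, f (a + t • v) ≤ (2 - (Fintype.card F : ℝ)⁻¹) * δ := by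
  have hlim : Filter.Tendsto (fun N : ℕ => ∑ x, (f x + (n + 1) * ((N : ℝ)⁻¹)) ^ n) Filter.atTop
      (nhds (∑ x, (f x + (n + 1) * 0) ^ n)) := by
    apply tendsto_finsetSum
    intro x _
    exact ((tendsto_inv_atTop_nhds_zero_nat (𝕜 := ℝ)).const_mul _).const_add _ |>.pow n
  simp only [mul_zero, add_zero] at hlim
  obtain ⟨N, hN, hN0⟩ := ((hlim.eventually_lt_const h).and (Filter.eventually_gt_atTop 0)).exists
  have hNr : (0 : ℝ) < N := by exact_mod_cast hN0
  obtain ⟨v, hv, hv2⟩ := exists_direction_nat hn (fun x => ⌈(N : ℝ) * f x⌉₊) ⌊(N : ℝ) * δ⌋₊ (by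
    have : (∑ x, ((⌈(N : ℝ) * f x⌉₊ : ℝ) + n) ^ n) < ((⌊(N : ℝ) * δ⌋₊ : ℝ) + 1) ^ n := by
      calc (∑ x, ((⌈(N : ℝ) * f x⌉₊ : ℝ) + n) ^ n)
          ≤ ∑ x, (N * (f x + (n + 1) * ((N : ℝ)⁻¹))) ^ n := by
            refine Finset.sum_le_sum fun x _ => pow_le_pow_left₀ (by positivity) ?_ n
            have h1 := (Nat.ceil_lt_add_one (mul_nonneg hNr.le (hf x))).le
            have h2 : (N : ℝ) * (f x + (n + 1) * ((N : ℝ)⁻¹)) = N * f x + (n + 1) := by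
              field_simp
            rw [h2]; linarith
        _ = N ^ n * ∑ x, (f x + (n + 1) * ((N : ℝ)⁻¹)) ^ n := by
            rw [Finset.mul_sum]; exact Finset.sum_congr rfl fun x _ => mul_pow _ _ _
        _ < N ^ n * δ ^ n := by gcongr
        _ = (N * δ) ^ n := (mul_pow _ _ _).symm
        _ ≤ _ := pow_le_pow_left₀ (by positivity) (Nat.lt_floor_add_one _).le n
    exact_mod_cast this)
  refine ⟨v, hv, fun a => ?_⟩
  have h1 := hv2 a
  have hq2 : 2 ≤ Fintype.card F := Fintype.one_lt_card
  set q := Fintype.card F with hq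
  have hq0 : (0 : ℝ) < q := by positivity
  have h2 : (q : ℝ) * ∑ t : F, (⌈(N : ℝ) * f (a + t • v)⌉₊ : ℝ) ≤ (2 * q - 1) * (⌊(N : ℝ) * δ⌋₊ : ℝ) := by
    have h3 : ((q * ∑ t : F, ⌈(N : ℝ) * f (a + t • v)⌉₊ : ℕ) : ℝ) ≤ (((2 * q - 1) * ⌊(N : ℝ) * δ⌋₊ : ℕ) : ℝ) := by
      exact_mod_cast h1
    rw [Nat.cast_mul, Nat.cast_mul, Nat.cast_sub (by omega)] at h3
    push_cast at h3
    exact h3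
  have hq2r : (2 : ℝ) ≤ q := by exact_mod_cast hq2
  have h4 : (q : ℝ) * (N * ∑ t : F, f (a + t • v)) ≤ (2 * q - 1) * (N * δ) := by
    calc (q : ℝ) * (N * ∑ t : F, f (a + t • v)) ≤ (q : ℝ) * ∑ t : F, (⌈(N : ℝ) * f (a + t • v)⌉₊ : ℝ) := by
          rw [Finset.mul_sum]
          gcongr
          exact Nat.le_ceil _
      _ ≤ _ := h2
      _ ≤ _ := by
          apply mul_le_mul_of_nonneg_left (Nat.floor_le (by positivity)) (by linarith)
  have h5 : (2 - (q : ℝ)⁻¹) * δ = ((2 * q - 1) * (N * δ)) / (q * N) := by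
    field_simp
  rw [h5, le_div_iff₀ (by positivity)]
  linarith

lemma exists_direction {F : Type*} [Field F] [Fintype F] {n : ℕ} (hn : 0 < n)
    (f : (Fin n → F) → ℝ) (hf : ∀ x, 0 ≤ f x) (δ : ℝ) (hδ : 0 ≤ δ) (h : ∑ x, f x ^ n ≤ δ ^ n) :
    ∃ v : Fin n → F, v ≠ 0 ∧ ∀ a, ∑ t : F, f (a + t • v) ≤ (2 - (Fintype.card F : ℝ)⁻¹) * δ := by
  by_contra! hcon
  have hev : ∀ᶠ ε in nhdsWithin δ (Set.Ioi δ), ∀ v : Fin n → F, v ≠ 0 →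
      ∃ a, (2 - (Fintype.card F : ℝ)⁻¹) * ε < ∑ t : F, f (a + t • v) := by
    rw [Filter.eventually_all]
    intro v
    by_cases hv : v = 0
    · simp [hv]
    · obtain ⟨a, ha⟩ := hcon v hv
      have : Filter.Tendsto (fun ε : ℝ => (2 - (Fintype.card F : ℝ)⁻¹) * ε) (nhdsWithin δ (Set.Ioi δ))
          (nhds ((2 - (Fintype.card F : ℝ)⁻¹) * δ)) :=
        (Filter.Tendsto.const_mul _ Filter.tendsto_id).mono_left nhdsWithin_le_nhds
      filter_upwards [this.eventually_lt_const ha] with ε hε _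
      exact ⟨a, hε⟩
  obtain ⟨ε, hε, hεδ⟩ := (hev.and self_mem_nhdsWithin).exists
  have hεδ : δ < ε := hεδ
  obtain ⟨v, hv, hv2⟩ := exists_direction_strict hn f hf ε (by linarith)
    (h.trans_lt (pow_lt_pow_left₀ hεδ hδ (by omega)))
  obtain ⟨a, ha⟩ := hε v hv
  exact absurd (hv2 a) (not_le.2 ha)

lemma exists_proj {F : Type*} [Field F] {n : ℕ} (v : Fin (n + 1) → F) (hv : v ≠ 0) :
    ∃ φ : (Fin (n + 1) → F) →ₗ[F] (Fin n → F), Function.Surjective φ ∧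
      LinearMap.ker φ = Submodule.span F {v} := by
  have h : Module.finrank F ((Fin (n + 1) → F) ⧸ Submodule.span F {v}) = Module.finrank F (Fin n → F) := by
    have h1 := Submodule.finrank_quotient_add_finrank (Submodule.span F {v})
    rw [finrank_span_singleton hv] at h1
    simp at h1 ⊢
    exact h1
  let e := LinearEquiv.ofFinrankEq _ _ h
  refine ⟨e.toLinearMap ∘ₗ (Submodule.span F {v}).mkQ, ?_, ?_⟩
  · exact e.surjective.comp (Submodule.mkQ_surjective _)
  · rw [LinearEquiv.ker_comp, Submodule.ker_mkQ]

lemma pmf_sum_toReal {α : Type*} [Fintype α] (R : PMF α) : ∑ x, (R x).toReal = 1 := by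
  rw [← ENNReal.toReal_sum (fun x _ => R.apply_ne_top x), ← tsum_fintype (L := .unconditional _), R.tsum_coe]; rfl

lemma pmf_le_iSup {α : Type*} [Fintype α] (R : PMF α) (x : α) :
    (R x).toReal ≤ ⨆ w, (R w).toReal :=
  le_ciSup (f := fun w => (R w).toReal) (Set.finite_range _).bddAbove x

lemma pmf_iSup_pos {α : Type*} [Fintype α] (R : PMF α) : 0 < ⨆ w, (R w).toReal := by
  obtain ⟨x, hx⟩ := R.support_nonempty
  exact lt_of_lt_of_le (ENNReal.toReal_pos ((R.mem_support_iff x).1 hx) (R.apply_ne_top x)) (pmf_le_iSup R x)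

lemma map_apply_le {F : Type*} [Field F] [Fintype F] {n k : ℕ} (R : PMF (Fin n → F))
    (φ : (Fin n → F) →ₗ[F] (Fin k → F)) (v : Fin n → F)
    (hker : LinearMap.ker φ = Submodule.span F {v}) (hv : v ≠ 0) (a : Fin n → F) :
    ((R.map φ) (φ a)).toReal ≤ ∑ t : F, (R (a + t • v)).toReal := by
  classical
  rw [PMF.map_apply, tsum_fintype, ENNReal.toReal_sum (by
    intro x _; split_ifs
    · exact R.apply_ne_top x
    · simp)]
  have hinj : Function.Injective (fun t : F => a + t • v) := by
    intro s t hst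
    exact smul_left_injective F hv (add_left_cancel hst)
  rw [← Finset.sum_image (f := fun x => (R x).toReal) (s := Finset.univ) (g := fun t : F => a + t • v)
    (fun s _ t _ hst => hinj hst)]
  simp only [apply_ite ENNReal.toReal, ENNReal.toReal_zero]
  trans ∑ x ∈ Finset.univ.filter (fun x => φ a = φ x), (R x).toReal
  · rw [Finset.sum_filter]
    refine le_of_eq (Finset.sum_congr rfl fun x _ => ?_)
    split_ifs <;> rfl
  apply Finset.sum_le_sum_of_subset_of_nonneg
  · intro x hx
    simp only [Finset.mem_filter, Finset.mem_univ, true_and] at hx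
    have hk : x - a ∈ LinearMap.ker φ := by simp [hx]
    rw [hker, Submodule.mem_span_singleton] at hk
    obtain ⟨t, ht⟩ := hk
    simp only [Finset.mem_image, Finset.mem_univ, true_and]
    exact ⟨t, by rw [ht]; abel⟩
  · intros; exact ENNReal.toReal_nonneg

lemma furstenberg_one {F : Type*} [Field F] [Fintype F] (n : ℕ) (R : PMF (Fin (n + 1) → F)) :
    ∃ φ : (Fin (n + 1) → F) →ₗ[F] (Fin n → F), Function.Surjective φ ∧
      (n : ℝ) / (n + 1) * minEntropy (Fintype.card F) R
        - Real.logb (Fintype.card F) (2 - (Fintype.card F : ℝ)⁻¹) ≤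
        minEntropy (Fintype.card F) (R.map φ) := by
  set M := ⨆ w, (R w).toReal with hM
  have hM0 : 0 < M := pmf_iSup_pos R
  set δ := M ^ ((n : ℝ) / (n + 1)) with hδ
  have hδ0 : 0 < δ := Real.rpow_pos_of_pos hM0 _
  have hδn : δ ^ (n + 1) = M ^ n := by
    rw [hδ, ← Real.rpow_natCast, ← Real.rpow_mul hM0.le, ← Real.rpow_natCast]
    congr 1
    push_cast
    field_simp
  obtain ⟨v, hv, hv2⟩ := exists_direction (Nat.succ_pos n) (fun x => (R x).toReal)
    (fun x => ENNReal.toReal_nonneg) δ hδ0.le (by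
      rw [hδn]
      calc ∑ x, (R x).toReal ^ (n + 1) ≤ ∑ x, M ^ n * (R x).toReal := by
            refine Finset.sum_le_sum fun x _ => ?_
            rw [pow_succ]
            gcongr
            exact pmf_le_iSup R x
        _ = M ^ n := by rw [← Finset.mul_sum, pmf_sum_toReal, mul_one])
  obtain ⟨φ, hφ, hker⟩ := exists_proj v hv
  refine ⟨φ, hφ, ?_⟩
  have hq2 : 1 < Fintype.card F := Fintype.one_lt_card
  have hq2r : (1 : ℝ) < Fintype.card F := by exact_mod_cast hq2
  have hc : 0 < 2 - (Fintype.card F : ℝ)⁻¹ := by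
    have := inv_lt_one_of_one_lt₀ hq2r
    linarith
  have hM' : ⨆ w, ((R.map φ) w).toReal ≤ (2 - (Fintype.card F : ℝ)⁻¹) * δ := by
    apply ciSup_le
    intro w
    obtain ⟨a, rfl⟩ := hφ w
    exact (map_apply_le R φ v hker hv a).trans (hv2 a)
  have hlog := Real.logb_le_logb_of_le hq2r (pmf_iSup_pos (R.map φ)) hM'
  rw [Real.logb_mul hc.ne' hδ0.ne', hδ, Real.logb_rpow_eq_mul_logb_of_pos hM0] at hlog
  rw [minEntropy, minEntropy, ← hM]
  linarith

lemma furstenberg_iter {F : Type*} [Field F] [Fintype F] (j : ℕ) (k : ℕ) :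
    ∀ (R : PMF (Fin (j + k) → F)), 1 ≤ j →
    ∃ φ : (Fin (j + k) → F) →ₗ[F] (Fin j → F), Function.Surjective φ ∧
      (j : ℝ) / (j + k) * minEntropy (Fintype.card F) R
        - k * Real.logb (Fintype.card F) (2 - (Fintype.card F : ℝ)⁻¹) ≤
        minEntropy (Fintype.card F) (R.map φ) := by
  have hq2 : 1 < Fintype.card F := Fintype.one_lt_card
  have hq2r : (1 : ℝ) < Fintype.card F := by exact_mod_cast hq2
  have hL : 0 ≤ Real.logb (Fintype.card F) (2 - (Fintype.card F : ℝ)⁻¹) := by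
    apply Real.logb_nonneg hq2r
    have := inv_lt_one_of_one_lt₀ hq2r
    linarith
  induction k with
  | zero =>
    intro R hj
    refine ⟨LinearMap.id, Function.surjective_id, ?_⟩
    have hj' : (j : ℝ) ≠ 0 := by positivity
    have : R.map (LinearMap.id : (Fin (j + 0) → F) →ₗ[F] (Fin j → F)) = R := PMF.map_id R
    rw [this]
    simp [hj']
  | succ k ih =>
    intro R hj
    obtain ⟨φ₁, h1, h1'⟩ := furstenberg_one (j + k) R
    obtain ⟨φ₂, h2, h2'⟩ := ih (R.map φ₁) hj
    refine ⟨φ₂ ∘ₗ φ₁, h2.comp h1, ?_⟩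
    have hcomp : R.map (φ₂ ∘ₗ φ₁) = (R.map φ₁).map φ₂ := by
      rw [PMF.map_comp]; rfl
    rw [hcomp]
    refine le_trans ?_ h2'
    have hj0 : (0 : ℝ) < j := by exact_mod_cast hj
    set L := Real.logb (Fintype.card F) (2 - (Fintype.card F : ℝ)⁻¹)
    set H := minEntropy (Fintype.card F) R
    have h3 := mul_le_mul_of_nonneg_left h1' (show (0 : ℝ) ≤ (j : ℝ) / (j + k) by positivity)
    have h4 : (j : ℝ) / (j + k) ≤ 1 := by
      rw [div_le_one (by positivity)]
      have : (0 : ℝ) ≤ k := by positivity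
      linarith
    have h5 : (j : ℝ) / (j + k) * (((j + k : ℕ) : ℝ) / ((j + k : ℕ) + 1) * H - L)
        = (j : ℝ) / (j + (k + 1 : ℕ)) * H - (j : ℝ) / (j + k) * L := by
      push_cast
      field_simp
      ring
    rw [h5] at h3
    have h6 : (j : ℝ) / (j + k) * L ≤ L := mul_le_of_le_one_left hL h4
    push_cast at h3 ⊢
    linarith

/-- Entropic Furstenberg bound: for any random variable `R` supported on `F_q^n` and any
`1 ≤ k < n`, there is a surjective linear map `φ : F_q^n → F_q^{n−k}` with
`H_∞^q(φ(R)) ≥ ((n−k)/n)·H_∞^q(R) − k·log_q(2 − q^{-1})`. -/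
theorem entropic_furstenberg {F : Type*} [Field F] [Fintype F] (q n k : ℕ)
    (hq : Fintype.card F = q) (hk : 1 ≤ k) (hkn : k < n) (R : PMF (Fin n → F)) :
    ∃ φ : (Fin n → F) →ₗ[F] (Fin (n - k) → F), Function.Surjective φ ∧
      ((n : ℝ) - k) / n * minEntropy q R - k * Real.logb q (2 - (q : ℝ)⁻¹) ≤
        minEntropy q (R.map φ) := by
  subst hq
  obtain ⟨j, hj⟩ : ∃ j, n - k = j := ⟨_, rfl⟩
  rw [hj]
  obtain rfl : n = j + k := by omega
  obtain ⟨φ, h1, h2⟩ := furstenberg_iter j k R (by omega)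
  refine ⟨φ, h1, ?_⟩
  push_cast
  rwa [add_sub_cancel_right]
end

section
/- Let q be a prime power and n, k, m positive integers with m ≤ q^k and k dividing n. Then every (k,m)-Furstenberg set S ⊆ F_q^n satisfies |S| ≥ 2^{−n/k} · m^{n/k}. -/
namespace FurstB
open MvPolynomial

/-- substitution `X_i ↦ X_i + c_i`. -/
noncomputable def Ev {K R : Type*} [CommRing K] [CommRing R] [Algebra K R] {r : ℕ}
    (c : Fin r → R) : MvPolynomial (Fin r) K →ₐ[K] MvPolynomial (Fin r) R :=
  aeval (fun i => X i + C (c i))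

/-- divisibility filtration -/
def ND {R : Type*} [CommRing R] {r : ℕ} (u : R) (f : MvPolynomial (Fin r) R) (e : ℕ) : Prop :=
  ∀ α : Fin r →₀ ℕ, u ^ (e - α.degree) ∣ coeff α f

section ND
variable {R : Type*} [CommRing R] {r : ℕ} {u : R}

lemma ND.mul {f g : MvPolynomial (Fin r) R} {e e' : ℕ} (hf : ND u f e) (hg : ND u g e') :
    ND u (f * g) (e + e') := by
  classical
  intro α
  rw [coeff_mul]
  refine Finset.dvd_sum fun x hx => ?_
  have hx' : x.1 + x.2 = α := by simpa using hx
  have hd : x.1.degree + x.2.degree = α.degree := by rw [← hx', map_add]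
  refine (pow_dvd_pow u ?_).trans ((pow_add u (e - x.1.degree) (e' - x.2.degree)) ▸
    mul_dvd_mul (hf x.1) (hg x.2))
  omega

lemma ND.one : ND u (1 : MvPolynomial (Fin r) R) 0 := by
  intro α; simp

lemma ND.pow {f : MvPolynomial (Fin r) R} {e : ℕ} (hf : ND u f e) (n : ℕ) :
    ND u (f ^ n) (n * e) := by
  induction n with
  | zero => simpa using ND.one
  | succ n ih => rw [pow_succ, Nat.succ_mul]; exact ih.mul hf

lemma ND.prod {ι : Type*} (s : Finset ι) (f : ι → MvPolynomial (Fin r) R) (e : ι → ℕ)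
    (h : ∀ i ∈ s, ND u (f i) (e i)) : ND u (∏ i ∈ s, f i) (∑ i ∈ s, e i) := by
  classical
  induction s using Finset.induction_on with
  | empty => simpa using ND.one
  | insert a s ha ih =>
    rw [Finset.prod_insert ha, Finset.sum_insert ha]
    exact (h a (by simp)).mul (ih fun i hi => h i (by simp [hi]))

lemma ND.gen (c : Fin r → R) (i : Fin r) : ND u (X i + C (u * c i)) 1 := by
  classical
  intro α
  by_cases h : α = 0
  · subst h
    simp
  · have : 1 ≤ α.degree := by
      rw [Nat.one_le_iff_ne_zero]
      rwa [Ne, Finsupp.degree_eq_zero_iff]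
    simp [Nat.sub_eq_zero_of_le this]

lemma ND.mono {f : MvPolynomial (Fin r) R} {e e' : ℕ} (hf : ND u f e) (h : e' ≤ e) :
    ND u f e' := fun α => (pow_dvd_pow u (by omega)).trans (hf α)

end ND

lemma nd_aeval {K R : Type*} [CommRing K] [CommRing R] [Algebra K R] {r : ℕ} (u : R)
    (c : Fin r → R) (P : MvPolynomial (Fin r) K) (M : ℕ)
    (hP : ∀ β : Fin r →₀ ℕ, β.degree < M → coeff β P = 0) :
    ND u (Ev (fun i => u * c i) P) M := by
  intro α
  rw [Ev, aeval_def, eval₂_eq', coeff_sum]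
  refine Finset.dvd_sum fun β hβ => ?_
  rw [IsScalarTower.algebraMap_apply K R (MvPolynomial (Fin r) R), MvPolynomial.algebraMap_eq,
    coeff_C_mul]
  refine Dvd.dvd.mul_left ?_ _
  have h1 : ND u (∏ i, (X i + C (u * c i)) ^ β i) (∑ i, β i * 1) :=
    ND.prod _ _ _ fun i _ => (ND.gen c i).pow _
  refine (h1.mono ?_) α
  by_contra hlt
  refine (mem_support_iff.mp hβ) (hP β ?_)
  rw [Finsupp.degree_eq_sum]
  simpa using hlt

/-- leading-part relation -/
def EP {K : Type*} [CommRing K] {r : ℕ} (f : MvPolynomial (Fin r) (Polynomial K))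
    (h : MvPolynomial (Fin r) K) (e : ℕ) : Prop :=
  ∀ α : Fin r →₀ ℕ, (e < α.degree → coeff α f = 0 ∧ coeff α h = 0) ∧
    (α.degree ≤ e → (coeff α f).natDegree ≤ e - α.degree ∧
      (coeff α f).coeff (e - α.degree) = coeff α h)

section EP
variable {K : Type*} [CommRing K] {r : ℕ}

lemma EP.mul {f f' : MvPolynomial (Fin r) (Polynomial K)} {h h' : MvPolynomial (Fin r) K}
    {e e' : ℕ} (H : EP f h e) (H' : EP f' h' e') : EP (f * f') (h * h') (e + e') := by
  classical
  intro α
  have key : ∀ x ∈ Finset.HasAntidiagonal.antidiagonal α, x.1.degree + x.2.degree = α.degree := by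
    intro x hx
    have hx' : x.1 + x.2 = α := by simpa using hx
    rw [← hx', map_add]
  rw [coeff_mul, coeff_mul]
  constructor
  · intro hlt
    constructor
    · refine Finset.sum_eq_zero fun x hx => ?_
      have := key x hx
      rcases lt_or_ge e x.1.degree with h1 | h1
      · rw [((H _).1 h1).1, zero_mul]
      · rw [((H' _).1 (by omega)).1, mul_zero]
    · refine Finset.sum_eq_zero fun x hx => ?_
      have := key x hx
      rcases lt_or_ge e x.1.degree with h1 | h1
      · rw [((H _).1 h1).2, zero_mul]
      · rw [((H' _).1 (by omega)).2, mul_zero]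
  · intro hle
    constructor
    · refine Polynomial.natDegree_sum_le_of_forall_le _ _ fun x hx => ?_
      have := key x hx
      rcases lt_or_ge e x.1.degree with h1 | h1
      · rw [((H _).1 h1).1, zero_mul]; simp
      rcases lt_or_ge e' x.2.degree with h2 | h2
      · rw [((H' _).1 h2).1, mul_zero]; simp
      refine Polynomial.natDegree_mul_le.trans ?_
      have a1 := ((H _).2 h1).1
      have a2 := ((H' _).2 h2).1
      omega
    · rw [Polynomial.finsetSum_coeff]
      refine Finset.sum_congr rfl fun x hx => ?_
      have := key x hx
      rcases lt_or_ge e x.1.degree with h1 | h1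
      · rw [((H _).1 h1).1, ((H _).1 h1).2]; simp
      rcases lt_or_ge e' x.2.degree with h2 | h2
      · rw [((H' _).1 h2).1, ((H' _).1 h2).2]; simp
      have e1 : e + e' - α.degree = (e - x.1.degree) + (e' - x.2.degree) := by omega
      rw [e1, Polynomial.coeff_mul_add_eq_of_natDegree_le ((H _).2 h1).1 ((H' _).2 h2).1,
        ((H _).2 h1).2, ((H' _).2 h2).2]

lemma EP.const (a : K) : EP (C (Polynomial.C a) : MvPolynomial (Fin r) (Polynomial K)) (C a) 0 := by
  classical
  intro α
  constructor
  · intro h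
    have : (0 : Fin r →₀ ℕ) ≠ α := by rintro rfl; simp at h
    simp [coeff_C, this]
  · intro h
    have : α = 0 := by simpa [Finsupp.degree_eq_zero_iff] using h
    subst this
    simp

lemma EP.pow {f : MvPolynomial (Fin r) (Polynomial K)} {h : MvPolynomial (Fin r) K}
    {e : ℕ} (H : EP f h e) (n : ℕ) : EP (f ^ n) (h ^ n) (n * e) := by
  induction n with
  | zero => simpa using EP.const (r := r) (1 : K)
  | succ n ih => rw [pow_succ, pow_succ, Nat.succ_mul]; exact ih.mul H

lemma EP.prod {ι : Type*} (s : Finset ι) (f : ι → MvPolynomial (Fin r) (Polynomial K))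
    (h : ι → MvPolynomial (Fin r) K) (e : ι → ℕ)
    (H : ∀ i ∈ s, EP (f i) (h i) (e i)) : EP (∏ i ∈ s, f i) (∏ i ∈ s, h i) (∑ i ∈ s, e i) := by
  classical
  induction s using Finset.induction_on with
  | empty => simpa using EP.const (r := r) (1 : K)
  | insert a s ha ih =>
    rw [Finset.prod_insert ha, Finset.prod_insert ha, Finset.sum_insert ha]
    exact (H a (by simp)).mul (ih fun i hi => H i (by simp [hi]))

lemma EP.zero (e : ℕ) : EP (0 : MvPolynomial (Fin r) (Polynomial K)) 0 e := by
  intro α; simp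

lemma EP.add {f f' : MvPolynomial (Fin r) (Polynomial K)} {h h' : MvPolynomial (Fin r) K}
    {e : ℕ} (H : EP f h e) (H' : EP f' h' e) : EP (f + f') (h + h') e := by
  intro α
  rw [coeff_add, coeff_add]
  refine ⟨fun hl => ?_, fun hl => ?_⟩
  · rw [((H α).1 hl).1, ((H α).1 hl).2, ((H' α).1 hl).1, ((H' α).1 hl).2]; simp
  · rw [Polynomial.coeff_add, ((H α).2 hl).2, ((H' α).2 hl).2]
    exact ⟨Polynomial.natDegree_add_le_of_degree_le ((H α).2 hl).1 ((H' α).2 hl).1, rfl⟩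

lemma EP.sum {ι : Type*} (s : Finset ι) (f : ι → MvPolynomial (Fin r) (Polynomial K))
    (h : ι → MvPolynomial (Fin r) K) (e : ℕ)
    (H : ∀ i ∈ s, EP (f i) (h i) e) : EP (∑ i ∈ s, f i) (∑ i ∈ s, h i) e := by
  classical
  induction s using Finset.induction_on with
  | empty => simpa using EP.zero (r := r) (K := K) e
  | insert a s ha ih =>
    rw [Finset.sum_insert ha, Finset.sum_insert ha]
    exact (H a (by simp)).add (ih fun i hi => H i (by simp [hi]))

lemma EP.lower {f : MvPolynomial (Fin r) (Polynomial K)} {h : MvPolynomial (Fin r) K}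
    {e d : ℕ} (H : EP f h e) (hd : e < d) : EP f 0 d := by
  intro α
  refine ⟨fun hl => ⟨((H α).1 (by omega)).1, by simp⟩, fun hl => ?_⟩
  rcases lt_or_ge e α.degree with h1 | h1
  · rw [((H α).1 h1).1]; simp
  · have := ((H α).2 h1).1
    refine ⟨by omega, ?_⟩
    rw [coeff_zero]
    exact Polynomial.coeff_eq_zero_of_natDegree_lt (by omega)

/-- The affine line with base point `v` and direction `b`. -/
noncomputable def line (v b : Fin r → K) (i : Fin r) : Polynomial K :=
  Polynomial.C (v i) + Polynomial.X * Polynomial.C (b i)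

lemma EP.gen (v b : Fin r → K) (i : Fin r) :
    EP (X i + C (line v b i)) (X i + C (b i)) 1 := by
  classical
  intro α
  have hs : Finsupp.degree (Finsupp.single i 1 : Fin r →₀ ℕ) = 1 := by simp
  by_cases h0 : α = 0
  · subst h0
    simp only [map_zero, coeff_add, coeff_zero_X, coeff_zero_C, zero_add, line]
    refine ⟨fun h => by omega, fun _ => ⟨?_, by simp [Polynomial.coeff_C]⟩⟩
    rw [Nat.sub_zero]
    compute_degree
  have h0' : (0 : Fin r →₀ ℕ) ≠ α := Ne.symm h0
  by_cases h1 : Finsupp.single i 1 = α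
  · subst h1
    simp [coeff_C, h0']
  · simp [coeff_C, coeff_X, h0', h1]

lemma ep_line (v b : Fin r → K) (P : MvPolynomial (Fin r) K) (d : ℕ) (hd : P.totalDegree ≤ d) :
    EP (Ev (line v b) P) (Ev b (homogeneousComponent d P)) d := by
  classical
  have e1 : Ev b (homogeneousComponent d P) = ∑ β ∈ P.support,
      if β.degree = d then C (coeff β P) * ∏ i, (X i + C (b i)) ^ β i else 0 := by
    rw [homogeneousComponent_apply, map_sum, Finset.sum_filter]
    refine Finset.sum_congr rfl fun β _ => ?_
    split_ifs
    · rw [Ev, aeval_monomial, Finsupp.prod_fintype _ _ (by simp), MvPolynomial.algebraMap_eq]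
    · rfl
  have e2 : Ev (line v b) P = ∑ β ∈ P.support,
      C (Polynomial.C (coeff β P)) * ∏ i, (X i + C (line v b i)) ^ β i := by
    rw [Ev, aeval_def, eval₂_eq']
    rfl
  rw [e1, e2]
  refine EP.sum _ _ _ _ fun β hβ => ?_
  have h1 := (EP.const (r := r) (coeff β P)).mul
    (EP.prod Finset.univ _ _ _ fun i _ => (EP.gen v b i).pow (β i))
  have h2 : 0 + ∑ i, β i * 1 = β.degree := by rw [Finsupp.degree_eq_sum]; simp
  rw [h2] at h1
  split_ifs with h
  · rwa [h] at h1
  · refine h1.lower ?_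
    have : β.degree ≤ P.totalDegree := le_totalDegree hβ
    omega

lemma line_dvd (v b : Fin r → K) (P : MvPolynomial (Fin r) K) (M : ℕ) (s : K)
    (hP : ∀ β : Fin r →₀ ℕ, β.degree < M → coeff β (Ev (fun i => v i + s * b i) P) = 0)
    (α : Fin r →₀ ℕ) :
    (Polynomial.X - Polynomial.C s) ^ (M - α.degree) ∣ coeff α (Ev (line v b) P) := by
  have := nd_aeval (Polynomial.X - Polynomial.C s) (fun i => Polynomial.C (b i)) _ M hP α
  have h2 : (Ev (fun i => (Polynomial.X - Polynomial.C s) * Polynomial.C (b i))).comp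
      (Ev (fun i => v i + s * b i)) = (Ev (line v b) : MvPolynomial (Fin r) K →ₐ[K] _) := by
    refine MvPolynomial.algHom_ext fun i => ?_
    have h3 : ∀ c : K, (Ev (fun i => (Polynomial.X - Polynomial.C s) * Polynomial.C (b i)))
        (C c : MvPolynomial (Fin r) K) = C (Polynomial.C c) := by
      intro c; rw [Ev, aeval_C]; rfl
    have h4 : Ev (fun i => v i + s * b i) (X i : MvPolynomial (Fin r) K)
        = X i + C (v i + s * b i) := by rw [Ev, aeval_X]
    rw [AlgHom.comp_apply, h4, map_add, h3, Ev, Ev, aeval_X, aeval_X, add_assoc, ← C_add, line]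
    congr 2
    simp only [map_add, map_mul]
    ring
  rw [← AlgHom.comp_apply, h2] at this
  exact this
end EP

lemma uni_bound {K : Type*} [Field K] (g : Polynomial K) (hg : g ≠ 0) (T : Finset K) (e : ℕ)
    (h : ∀ s ∈ T, (Polynomial.X - Polynomial.C s) ^ e ∣ g) : T.card * e ≤ g.natDegree := by
  have h1 : (∏ s ∈ T, (Polynomial.X - Polynomial.C s) ^ e) ∣ g := by
    refine Finset.prod_dvd_of_coprime ?_ h
    intro a _ b _ hab
    exact (Polynomial.isCoprime_X_sub_C_of_isUnit_sub (sub_ne_zero.mpr hab).isUnit).pow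
  have h2 := Polynomial.natDegree_le_of_dvd h1 hg
  rw [Polynomial.natDegree_prod_of_monic _ _ (fun s _ => (Polynomial.monic_X_sub_C s).pow e)] at h2
  simpa [Polynomial.natDegree_pow] using h2

lemma fsr {R : Type*} [CommRing R] {r : ℕ} (g : MvPolynomial (Fin r) R) :
    finSuccEquiv R r (rename Fin.succ g) = Polynomial.C g := by
  induction g using MvPolynomial.induction_on with
  | C c => simp [finSuccEquiv_apply]
  | add p q hp hq => simp only [map_add, hp, hq]
  | mul_X p i hp => simp only [map_mul, hp, rename_X, finSuccEquiv_X_succ]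

lemma ev_rename {K : Type*} [CommRing K] {r : ℕ} (a : Fin r → K) (g : MvPolynomial (Fin r) K) :
    Ev (line (Fin.cons 0 a) (Fin.cons 1 0)) (rename Fin.succ g) =
        rename Fin.succ (map Polynomial.C (Ev a g)) := by
  induction g using MvPolynomial.induction_on with
  | C c => simp [Ev]
  | add p q hp hq => simp only [map_add, hp, hq]
  | mul_X p i hp =>
    simp only [map_mul, hp, rename_X]
    congr 1
    simp [Ev, line]

lemma coeff_line {K : Type*} [CommRing K] {r : ℕ} (a : Fin r → K)
    (P : MvPolynomial (Fin (r + 1)) K) (α : Fin r →₀ ℕ) (i : ℕ) :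
    (coeff (Finsupp.cons 0 α) (Ev (line (Fin.cons 0 a) (Fin.cons 1 0)) P)).coeff i =
      coeff α (Ev a ((finSuccEquiv K r P).coeff i)) := by
  obtain ⟨p, rfl⟩ := (finSuccEquiv K r).symm.surjective P
  rw [AlgEquiv.apply_symm_apply]
  induction p using Polynomial.induction_on' with
  | add p q hp hq => simp only [map_add, coeff_add, Polynomial.coeff_add, hp, hq]
  | monomial j g =>
    have h1 : (finSuccEquiv K r).symm (Polynomial.monomial j g) = rename Fin.succ g * X 0 ^ j := by
      rw [AlgEquiv.symm_apply_eq, map_mul, map_pow, finSuccEquiv_X_zero, fsr,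
        Polynomial.C_mul_X_pow_eq_monomial]
    have h3 : Ev (line (Fin.cons 0 a) (Fin.cons 1 0)) (X 0 : MvPolynomial (Fin (r + 1)) K) =
      X 0 + C Polynomial.X := by simp [Ev, line]
    rw [h1, map_mul, map_pow, ev_rename, h3, ← finSuccEquiv_coeff_coeff, map_mul, map_pow, map_add,
      finSuccEquiv_X_zero, fsr, Polynomial.mul_coeff_zero]
    have h4 : finSuccEquiv (Polynomial K) r (C Polynomial.X) = Polynomial.C (C Polynomial.X) := by
      simp [finSuccEquiv_apply]
    rw [h4, Polynomial.coeff_zero_eq_eval_zero ((_ : Polynomial _) ^ j)]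
    simp only [Polynomial.coeff_C_zero, Polynomial.eval_pow, Polynomial.eval_add,
      Polynomial.eval_X, Polynomial.eval_C, zero_add]
    rw [← C_pow, mul_comm, coeff_C_mul, coeff_map, Polynomial.coeff_X_pow_mul',
      Polynomial.coeff_monomial, Polynomial.coeff_C]
    split_ifs with u1 u2 u3 u3 <;> first | rfl | omega

lemma sz {K : Type*} [Field K] [Fintype K] : ∀ (r : ℕ) (P : MvPolynomial (Fin r) K) (l : ℕ),
    P.totalDegree < l * Fintype.card K →
    (∀ (a : Fin r → K) (β : Fin r →₀ ℕ), β.degree < l → coeff β (Ev a P) = 0) → P = 0 := by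
  intro r
  induction r with
  | zero =>
    intro P l hl h
    have hl0 : 0 < l := by
      rcases Nat.eq_zero_or_pos l with rfl | h
      · simp at hl
      · exact h
    have := h 0 0 (by simpa using hl0)
    obtain ⟨c, rfl⟩ := C_surjective (Fin 0) P
    simpa [Ev] using this
  | succ r ih =>
    intro P l hl h
    by_contra hP
    set p := finSuccEquiv K r P with hp
    have hp0 : p ≠ 0 := by simpa [hp] using hP
    set t := p.natDegree with ht
    have hlc : p.coeff t ≠ 0 := by simpa [ht] using hp0
    have hdeg : (p.coeff t).totalDegree + t ≤ P.totalDegree :=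
      totalDegree_coeff_finSuccEquiv_add_le P t hlc
    set Q := Fintype.card K with hQ
    have hQ0 : 0 < Q := Fintype.card_pos
    have hex : ∃ (a : Fin r → K) (β : Fin r →₀ ℕ),
        β.degree < (p.coeff t).totalDegree / Q + 1 ∧ coeff β (Ev a (p.coeff t)) ≠ 0 := by
      by_contra hcon
      push Not at hcon
      refine hlc (ih _ _ ?_ hcon)
      rw [mul_comm]
      exact Nat.lt_mul_div_succ _ hQ0
    obtain ⟨a, β, hβ, hne⟩ := hex
    set g := coeff (Finsupp.cons 0 β) (Ev (line (Fin.cons 0 a) (Fin.cons 1 0)) P) with hg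
    have hgc : ∀ i, g.coeff i = coeff β (Ev a (p.coeff i)) := fun i => coeff_line a P β i
    have hg0 : g ≠ 0 := by
      intro h0
      apply hne
      rw [← hgc, h0, Polynomial.coeff_zero]
    have hgd : g.natDegree ≤ t := by
      rw [Polynomial.natDegree_le_iff_coeff_eq_zero]
      intro N hN
      rw [hgc, Polynomial.coeff_eq_zero_of_natDegree_lt hN, map_zero, coeff_zero]
    have hcd : (Finsupp.cons 0 β : Fin (r + 1) →₀ ℕ).degree = β.degree := by
      simp [Finsupp.degree_eq_sum, Fin.sum_univ_succ]
    have hb := uni_bound g hg0 Finset.univ (l - β.degree) (fun s _ => by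
      have := line_dvd (Fin.cons 0 a) (Fin.cons 1 0) P l s (fun γ hγ => h _ γ hγ) (Finsupp.cons 0 β)
      rwa [hcd] at this)
    rw [Finset.card_univ, ← hQ] at hb
    have h1 : β.degree * Q ≤ (p.coeff t).totalDegree :=
      (Nat.mul_le_mul_right _ (Nat.lt_succ_iff.mp hβ)).trans (Nat.div_mul_le_self _ _)
    have h2 : l * Q ≤ (l - β.degree) * Q + β.degree * Q := by
      rw [← Nat.add_mul]; exact Nat.mul_le_mul_right _ (by omega)
    have h3 : Q * (l - β.degree) = (l - β.degree) * Q := mul_comm _ _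
    omega

/-- exponents of degree `< N` -/
def DD (r N : ℕ) : Finset (Fin r →₀ ℕ) :=
  (Finset.range N).biUnion (fun e => Finset.finsuppAntidiag Finset.univ e)

lemma mem_DD {r N : ℕ} {α : Fin r →₀ ℕ} : α ∈ DD r N ↔ α.degree < N := by
  simp [DD, Finset.mem_finsuppAntidiag, Finsupp.degree_eq_sum]

lemma card_DD (r N : ℕ) : (DD r (N + 1)).card * r.factorial = (N + 1).ascFactorial r := by
  have h1 : ∀ N, (DD r (N + 1)).card = Nat.multichoose (r + 1) N := by
    intro N
    rw [DD, Finset.card_biUnion]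
    · simp only [Finset.card_finsuppAntidiag_nat_eq_multichoose, Finset.card_univ, Fintype.card_fin]
      induction N with
      | zero => simp
      | succ N ih => rw [Finset.sum_range_succ, ih, Nat.multichoose_succ_succ, add_comm]
    · intro i _ j _ hij
      rw [Function.onFun, Finset.disjoint_left]
      intro x hx hx'
      rw [Finset.mem_finsuppAntidiag] at hx hx'
      exact hij (hx.1.symm.trans hx'.1)
  rw [h1, Nat.multichoose_eq, Nat.ascFactorial_eq_factorial_mul_choose, mul_comm]
  congr 1
  have : r + 1 + N - 1 = N + r := by omega
  rw [this, Nat.choose_symm_add]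

lemma exists_poly {K : Type*} [Field K] {r : ℕ} (S : Finset (Fin r → K)) (N M : ℕ)
    (hc : S.card * (DD r M).card < (DD r (N + 1)).card) :
    ∃ P : MvPolynomial (Fin r) K, P ≠ 0 ∧ P.totalDegree ≤ N ∧
      ∀ a ∈ S, ∀ β : Fin r →₀ ℕ, β.degree < M → coeff β (Ev a P) = 0 := by
  classical
  let Φ : (DD r (N + 1) → K) →ₗ[K] MvPolynomial (Fin r) K :=
    Fintype.linearCombination K (fun α : DD r (N + 1) => monomial (α : Fin r →₀ ℕ) (1 : K))
  let L : (DD r (N + 1) → K) →ₗ[K] (S × DD r M → K) :=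
    LinearMap.pi fun x => (lcoeff K (x.2 : Fin r →₀ ℕ)) ∘ₗ (Ev (x.1 : Fin r → K)).toLinearMap ∘ₗ Φ
  have hL : LinearMap.ker L ≠ ⊥ := by
    apply LinearMap.ker_ne_bot_of_finrank_lt
    simpa using hc
  obtain ⟨c, hc1, hc2⟩ := (Submodule.ne_bot_iff _).mp hL
  have hΦ : Φ c = ∑ α : DD r (N + 1), monomial (α : Fin r →₀ ℕ) (c α) := by
    simp [Φ, Fintype.linearCombination_apply, smul_monomial]
  refine ⟨Φ c, ?_, ?_, ?_⟩
  · intro h0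
    apply hc2
    funext α
    have : coeff (α : Fin r →₀ ℕ) (Φ c) = c α := by
      rw [hΦ, coeff_sum, Finset.sum_eq_single α]
      · simp
      · intro b _ hb
        rw [coeff_monomial, if_neg]
        exact fun h => hb (Subtype.ext h)
      · simp
    rw [← this, h0]; simp
  · rw [hΦ]
    refine totalDegree_finsetSum_le fun α _ => ?_
    refine (totalDegree_monomial_le _ _).trans ?_
    exact Nat.lt_succ_iff.mp (mem_DD.mp α.2)
  · intro a ha β hβ
    have := congrFun (LinearMap.mem_ker.mp hc1) (⟨a, ha⟩, ⟨β, mem_DD.mpr hβ⟩)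
    exact this

lemma main_bound {K : Type*} [Field K] [Fintype K] {r m : ℕ} (hr : 0 < r) (hm : 0 < m)
    (hmq : m ≤ Fintype.card K) (S : Finset (Fin r → K))
    (hS : ∀ b : Fin r → K, b ≠ 0 → ∃ (v : Fin r → K) (T : Finset K), m ≤ T.card ∧
      ∀ s ∈ T, (fun i => v i + s * b i) ∈ S) : m ^ r ≤ 2 ^ r * S.card := by
  set Q := Fintype.card K with hQ
  obtain ⟨N, hN⟩ : ∃ N, N + 1 = m * r * Q := ⟨m * r * Q - 1, Nat.sub_add_cancel (by
    have : 0 < Q := by omega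
    exact Nat.mul_pos (Nat.mul_pos hm hr) this)⟩
  obtain ⟨M, hM⟩ : ∃ M, M + 1 = m * r + r * (Q - 1) := ⟨m * r + r * (Q - 1) - 1,
    Nat.sub_add_cancel (by have : 0 < m * r := by positivity
                           omega)⟩
  have hcard : (DD r (N + 1)).card ≤ S.card * (DD r (M + 1)).card := by
    by_contra hlt
    push Not at hlt
    obtain ⟨P, hP0, hPd, hPv⟩ := exists_poly S N (M + 1) hlt
    set d := P.totalDegree with hd
    set H := homogeneousComponent d P with hH
    have hH0 : H ≠ 0 := by
      intro h0
      obtain ⟨β, hβ, hβd⟩ := Finset.exists_mem_eq_sup P.support (support_nonempty.mpr hP0)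
        (fun s => s.sum fun _ e => e)
      have h1 : β.degree = d := hβd.symm
      have h2 := coeff_homogeneousComponent d P β
      rw [← hH, h0, if_pos h1, coeff_zero] at h2
      exact (mem_support_iff.mp hβ) h2.symm
    have hEv0 : Ev (0 : Fin r → K) H = H := by
      simp [Ev]
    have hSne : S.Nonempty := by
      have : (fun _ => 1 : Fin r → K) ≠ 0 := by
        intro h
        simpa using congrFun h ⟨0, hr⟩
      obtain ⟨v, T, hT, h⟩ := hS _ this
      obtain ⟨s, hs⟩ : T.Nonempty := Finset.card_pos.mp (by omega)
      exact ⟨_, h s hs⟩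
    have hMd : M + 1 ≤ d := by
      by_contra hlt
      push Not at hlt
      obtain ⟨a, ha⟩ := hSne
      apply hH0
      ext α
      rw [← hEv0, coeff_zero]
      have hep := ep_line a 0 P d le_rfl α
      rcases lt_or_ge d α.degree with hα | hα
      · exact (hep.1 hα).2
      · have hep := hep.2 hα
        rw [← hep.2]
        by_cases hg : coeff α (Ev (line a 0) P) = 0
        · rw [hg, Polynomial.coeff_zero]
        exfalso
        have hu := uni_bound _ hg {0} (M + 1 - α.degree) (fun s hs =>
          line_dvd a 0 P (M + 1) s (by simpa using hPv a ha) α)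
        have h1 := hu.trans hep.1
        rw [Finset.card_singleton] at h1
        omega
    apply hH0
    apply sz r H (m * r)
    · have : H.totalDegree ≤ d := (homogeneousComponent_isHomogeneous d P).totalDegree_le
      rw [← hQ, ← hN]
      omega
    · intro b β hβ
      by_cases hb : b = 0
      · subst hb
        rw [hEv0, hH, coeff_homogeneousComponent, if_neg]
        omega
      · obtain ⟨v, T, hT, h⟩ := hS b hb
        have hep := (ep_line v b P d le_rfl β).2 (by omega)
        rw [← hep.2]
        by_cases hg : coeff β (Ev (line v b) P) = 0
        · rw [hg, Polynomial.coeff_zero]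
        exfalso
        have hu := uni_bound _ hg T (M + 1 - β.degree) (fun s hs =>
          line_dvd v b P (M + 1) s (hPv _ (h s hs)) β)
        have h1 := hu.trans hep.1
        have h2 : m * (M + 1 - β.degree) ≤ d - β.degree := (Nat.mul_le_mul_right _ hT).trans h1
        obtain ⟨c, hc⟩ : ∃ c, m * r = β.degree + 1 + c := ⟨m * r - (β.degree + 1), by omega⟩
        obtain ⟨Q', hQ'⟩ : ∃ Q', Q = Q' + 1 := ⟨Q - 1, by omega⟩
        have h3 : M + 1 - β.degree = 1 + c + r * Q' := by
          rw [hM, hQ', hc]; simp; omega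
        rw [h3] at h2
        have h4 : d ≤ m * r * Q' + β.degree + c := by
          have : m * r * Q = m * r * Q' + m * r := by rw [hQ']; ring
          omega
        have h5 : m * (1 + c + r * Q') = m * r * Q' + m * (1 + c) := by ring
        have h6 : 1 * (1 + c) ≤ m * (1 + c) := Nat.mul_le_mul_right _ hm
        omega
  have h1 : (N + 1) ^ r ≤ S.card * (M + r) ^ r := by
    calc (N + 1) ^ r ≤ (N + 1).ascFactorial r := Nat.pow_succ_le_ascFactorial _ _
      _ = (DD r (N + 1)).card * r.factorial := (card_DD _ _).symm
      _ ≤ S.card * (DD r (M + 1)).card * r.factorial := Nat.mul_le_mul_right _ hcard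
      _ = S.card * (M + 1).ascFactorial r := by rw [mul_assoc, card_DD]
      _ ≤ _ := Nat.mul_le_mul_left _ (Nat.ascFactorial_le_pow_add _ _)
  have h2 : M + r ≤ 2 * (r * Q) := by
    obtain ⟨Q', hQ'⟩ : ∃ Q', Q = Q' + 1 := ⟨Q - 1, by omega⟩
    have h3 : m * r ≤ r * Q := by rw [mul_comm]; exact Nat.mul_le_mul_left _ hmq
    have h4 : r * Q = r * (Q - 1) + r := by rw [hQ']; simp; ring
    omega
  have h3 : m ^ r * (r * Q) ^ r ≤ 2 ^ r * S.card * (r * Q) ^ r := by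
    calc m ^ r * (r * Q) ^ r = (N + 1) ^ r := by rw [hN, ← mul_pow, mul_assoc]
      _ ≤ S.card * (M + r) ^ r := h1
      _ ≤ S.card * (2 * (r * Q)) ^ r := Nat.mul_le_mul_left _ (Nat.pow_le_pow_left h2 _)
      _ = _ := by rw [mul_pow]; ring
  refine Nat.le_of_mul_le_mul_right h3 ?_
  have : 0 < Q := by omega
  positivity
end FurstB

open Classical in
/-- If `k` divides `n` and `m ≤ q^k`, then every `(k,m)`-Furstenberg set `S ⊆ F_q^n`
satisfies `|S| ≥ 2^{−n/k} · m^{n/k}`. -/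
theorem furstenberg_bound_dvd {F : Type*} [Field F] [Fintype F] (q n k m : ℕ)
    (hq : Fintype.card F = q) (hn : 0 < n) (hk : 0 < k) (hm : 0 < m)
    (hdvd : k ∣ n) (hmq : m ≤ q ^ k)
    (S : Finset (Fin n → F))
    (hFurst : ∀ W : Submodule F (Fin n → F), Module.finrank F W = k →
      ∃ v : Fin n → F, m ≤ (S.filter (fun x => x - v ∈ W)).card) :
    (1 / 2 : ℝ) ^ (n / k) * (m : ℝ) ^ (n / k) ≤ S.card := by
  obtain ⟨r, rfl⟩ := hdvd
  have hr : 0 < r := Nat.pos_of_mul_pos_left hn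
  rw [Nat.mul_div_cancel_left r hk]
  obtain ⟨p, hp⟩ := CharP.exists F
  haveI : Fact p.Prime := ⟨CharP.char_is_prime F p⟩
  haveI : NeZero k := ⟨hk.ne'⟩
  let K := FiniteField.Extension F p k
  haveI : Fintype K := Fintype.ofFinite K
  have hfr : Module.finrank F K = k := FiniteField.finrank_extension F p k
  haveI : FiniteDimensional F K := FiniteDimensional.of_finrank_pos (by omega)
  have hcK : Fintype.card K = q ^ k := by
    rw [Module.card_eq_pow_finrank (K := F) (V := K), hfr, hq]
  have hfr2 : Module.finrank F (Fin r → K) = Module.finrank F (Fin (k * r) → F) := by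
    rw [Module.finrank_pi_fintype]
    simp [hfr, mul_comm]
  let e : (Fin r → K) ≃ₗ[F] (Fin (k * r) → F) := LinearEquiv.ofFinrankEq _ _ hfr2
  have key := FurstB.main_bound (K := K) hr hm (by rw [hcK]; exact hmq)
    (S.map e.symm.toEquiv.toEmbedding) (by
      intro b hb
      let g : K →ₗ[F] (Fin r → K) := (LinearMap.toSpanSingleton K (Fin r → K) b).restrictScalars F
      have hg : Function.Injective g := smul_left_injective K hb
      let g' : K →ₗ[F] (Fin (k * r) → F) := e.toLinearMap ∘ₗ g
      have hg' : Function.Injective g' := e.injective.comp hg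
      obtain ⟨v, hv⟩ := hFurst (LinearMap.range g')
        ((LinearMap.finrank_range_of_inj hg').trans hfr)
      refine ⟨e.symm v, Finset.univ.filter (fun s => g' s + v ∈ S), hv.trans ?_, ?_⟩
      · rw [← Finset.card_image_of_injective (Finset.univ.filter (fun s => g' s + v ∈ S))
          (f := fun s => g' s + v) (fun a b h => hg' (add_right_cancel h))]
        apply Finset.card_le_card
        intro x hx
        rw [Finset.mem_filter] at hx
        obtain ⟨hxS, s, hs⟩ := hx
        rw [Finset.mem_image]
        have : g' s + v = x := by rw [hs, sub_add_cancel]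
        exact ⟨s, by simp [this, hxS], this⟩
      · intro s hs
        have hs : g' s + v ∈ S := by simpa using hs
        rw [Finset.mem_map]
        refine ⟨_, hs, ?_⟩
        change e.symm (e (g s) + v) = _
        rw [map_add, LinearEquiv.symm_apply_apply, add_comm]
        rfl)
  rw [Finset.card_map] at key
  have key' : (m : ℝ) ^ r ≤ 2 ^ r * (S.card : ℝ) := by exact_mod_cast key
  rw [div_pow, one_pow, one_div, inv_mul_le_iff₀ (by positivity)]
  exact key'
end

section
/- Let q be a prime power, n/2 < k < n, and q^{n−k} < m ≤ q^k. If S ⊆ F_q^n and L is a set of C(n,k)_q distinct k-flats each containing at least m points of S, then |S| ≥ (1 − q^{n−2k} − √(q^{n−k}/m)) · m · q^{n−k}. -/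
/-- The q-binomial coefficient `C(n,k)_q = ∏_{i=0}^{k-1} (q^{n-i} - 1)/(q^{k-i} - 1)`,
as a real number. -/
noncomputable def qBinom (q n k : ℕ) : ℝ :=
  ∏ i ∈ Finset.range k, ((q : ℝ) ^ (n - i) - 1) / ((q : ℝ) ^ (k - i) - 1)

open Classical in
theorem grass_card_le {F V : Type*} [Field F] [Fintype F] [AddCommGroup V] [Module F V] [Fintype V]
    (n k : ℕ) (hkn : k ≤ n) (hV : Module.finrank F V = n)
    (G : Finset (Submodule F V)) (hG : ∀ W, W ∈ G ↔ Module.finrank F W = k) :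
    (G.card : ℝ) ≤ qBinom (Fintype.card F) n k := by
  set q := Fintype.card F with hq
  have hq1 : 1 < q := Fintype.one_lt_card
  have h1 := card_linearIndependent (K := F) (V := V) (k := k) (by omega)
  have h2 : ∀ W : G, Nat.card { s : Fin k → (W : Submodule F V) // LinearIndependent F s } =
      ∏ i : Fin k, (q ^ k - q ^ i.val) := by
    intro W
    have hW := (hG W).1 W.2
    have := card_linearIndependent (K := F) (V := (W : Submodule F V)) (k := k) (by omega)
    rw [this, hW]
  have h3 : Nat.card (Σ W : G, { s : Fin k → (W : Submodule F V) // LinearIndependent F s }) ≤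
      Nat.card { s : Fin k → V // LinearIndependent F s } := by
    let φ : (Σ W : G, { s : Fin k → (W : Submodule F V) // LinearIndependent F s }) →
        { s : Fin k → V // LinearIndependent F s } :=
      fun p => ⟨fun i => ((p.2.1 i : (p.1 : Submodule F V)) : V),
        p.2.2.map' (Submodule.subtype (p.1 : Submodule F V)) (Submodule.ker_subtype _)⟩
    have hspan : ∀ p, Submodule.span F (Set.range (φ p).1) = (p.1 : Submodule F V) := by
      intro p
      apply Submodule.eq_of_le_of_finrank_eq
      · rw [Submodule.span_le]
        rintro _ ⟨i, rfl⟩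
        exact (p.2.1 i).2
      · rw [finrank_span_eq_card (φ p).2, (hG _).1 p.1.2]; simp
    apply Nat.card_le_card_of_injective φ
    intro p p' h
    have e : p.1 = p'.1 := by
      apply Subtype.ext
      rw [← hspan p, ← hspan p', h]
    obtain ⟨W, s⟩ := p
    obtain ⟨W', s'⟩ := p'
    simp only at e
    subst e
    congr 1
    apply Subtype.ext
    funext i
    apply Subtype.ext
    exact congrFun (congrArg Subtype.val h) i
  rw [Nat.card_sigma, Finset.sum_congr rfl (fun W _ => h2 W), h1, hV] at h3
  simp only [Finset.sum_const, Finset.card_univ, Fintype.card_coe, smul_eq_mul] at h3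
  rw [Fin.prod_univ_eq_prod_range (fun i => q ^ k - q ^ i),
    Fin.prod_univ_eq_prod_range (fun i => q ^ n - q ^ i)] at h3
  have hq1' : (1 : ℝ) < q := by exact_mod_cast hq1
  have key : ∀ N, k ≤ N → ((∏ i ∈ Finset.range k, (q ^ N - q ^ i) : ℕ) : ℝ) =
      (∏ i ∈ Finset.range k, (q : ℝ) ^ i) * ∏ i ∈ Finset.range k, ((q : ℝ) ^ (N - i) - 1) := by
    intro N hN
    rw [Nat.cast_prod, ← Finset.prod_mul_distrib]
    apply Finset.prod_congr rfl
    intro i hi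
    have hi' := Finset.mem_range.1 hi
    rw [Nat.cast_sub (Nat.pow_le_pow_right (by omega) (by omega))]
    push_cast
    rw [mul_sub, ← pow_add, mul_one]
    congr 2; omega
  have h4 : (G.card : ℝ) * ((∏ i ∈ Finset.range k, (q ^ k - q ^ i) : ℕ) : ℝ) ≤
    ((∏ i ∈ Finset.range k, (q ^ n - q ^ i) : ℕ) : ℝ) := by exact_mod_cast h3
  rw [key k le_rfl, key n hkn] at h4
  have p1 : 0 < ∏ i ∈ Finset.range k, (q : ℝ) ^ i := Finset.prod_pos (fun i _ => by positivity)
  have p2 : 0 < ∏ i ∈ Finset.range k, ((q : ℝ) ^ (k - i) - 1) := by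
    apply Finset.prod_pos
    intro i hi
    have hi' := Finset.mem_range.1 hi
    have := one_lt_pow₀ hq1' (n := k - i) (by omega)
    linarith
  rw [qBinom, Finset.prod_div_distrib, le_div_iff₀ p2]
  refine le_of_mul_le_mul_left ?_ p1
  linarith

open Classical in
theorem grass_transitive {F V : Type*} [Field F] [AddCommGroup V] [Module F V]
    (k : ℕ)
    (G : Finset (Submodule F V)) (hG : ∀ W, W ∈ G ↔ Module.finrank F W = k)
    (z w : V) (hz : z ≠ 0) (hw : w ≠ 0) :
    (G.filter (fun W => z ∈ W)).card ≤ (G.filter (fun W => w ∈ W)).card := by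
  obtain ⟨g, hg⟩ := Submodule.exists_linearEquiv_restrict_eq
    ((LinearEquiv.toSpanNonzeroSingleton F V z hz).symm.trans
      (LinearEquiv.toSpanNonzeroSingleton F V w hw))
  have hgz : g z = w := by
    have := hg (LinearEquiv.toSpanNonzeroSingleton F V z hz 1)
    rw [LinearEquiv.trans_apply, LinearEquiv.symm_apply_apply] at this
    rw [LinearEquiv.toSpanNonzeroSingleton_one, LinearEquiv.toSpanNonzeroSingleton_one] at this
    exact this.symm
  apply Finset.card_le_card_of_injOn (fun W => W.map (g : V →ₗ[F] V))
  · intro W hW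
    simp only [Finset.coe_filter, Set.mem_ofPred_eq] at hW ⊢
    refine ⟨?_, ⟨z, hW.2, hgz⟩⟩
    rw [hG, ← (hG W).1 hW.1]
    exact LinearEquiv.finrank_map_eq g W
  · intro W _ W' _ h
    exact Submodule.map_injective_of_injective g.injective h

open Classical in
theorem grass_pair {F V : Type*} [Field F] [Fintype F] [AddCommGroup V] [Module F V] [Fintype V]
    (n k : ℕ) (hV : Module.finrank F V = n)
    (G : Finset (Submodule F V)) (hG : ∀ W, W ∈ G ↔ Module.finrank F W = k)
    (z : V) (hz : z ≠ 0) :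
    (G.filter (fun W => z ∈ W)).card * (Fintype.card F : ℝ) ^ n ≤
      G.card * (Fintype.card F : ℝ) ^ k := by
  have hc : ∀ W ∈ G, (Finset.univ.filter (fun w : V => w ∈ W)).card = Fintype.card F ^ k := by
    intro W hW
    rw [← (hG W).1 hW, ← Module.card_eq_pow_finrank (K := F) (V := W), Fintype.card_subtype]
  have h1 : ∑ w : V, (G.filter (fun W => w ∈ W)).card = G.card * Fintype.card F ^ k := by
    simp_rw [Finset.card_filter]
    rw [Finset.sum_comm]
    simp_rw [← Finset.card_filter]
    rw [Finset.sum_congr rfl hc]; simp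
  have h2 : ∀ w ∈ Finset.univ.erase (0 : V), (G.filter (fun W => w ∈ W)).card =
      (G.filter (fun W => z ∈ W)).card := by
    intro w hw
    have hw := (Finset.mem_erase.1 hw).1
    exact le_antisymm (grass_transitive k G hG w z hw hz) (grass_transitive k G hG z w hz hw)
  rw [← Finset.add_sum_erase _ _ (Finset.mem_univ (0 : V)), Finset.sum_congr rfl h2] at h1
  simp only [Finset.sum_const, smul_eq_mul] at h1
  rw [Finset.card_erase_of_mem (Finset.mem_univ _), Finset.card_univ,
    Module.card_eq_pow_finrank (K := F) (V := V), hV] at h1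
  have h3 : (G.filter (fun W => z ∈ W)).card ≤ G.card := Finset.card_filter_le _ _
  have h0 : (G.filter (fun W => (0 : V) ∈ W)).card = G.card := by
    congr 1; apply Finset.filter_true_of_mem; intro W _; exact W.zero_mem
  rw [h0] at h1
  have hp : 1 ≤ Fintype.card F ^ n := Nat.one_le_pow _ _ Fintype.card_pos
  have : (G.filter (fun W => z ∈ W)).card * Fintype.card F ^ n ≤ G.card * Fintype.card F ^ k := by
    rw [← h1]
    obtain ⟨t, ht⟩ := Nat.exists_eq_add_of_le hp
    rw [ht]; simp only [Nat.add_sub_cancel_left]; nlinarith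
  exact_mod_cast this

open Classical in
/-- Variance bound for a single subspace. -/
theorem var_one {F V : Type*} [Field F] [Fintype F] [AddCommGroup V] [Module F V] [Fintype V]
    (n k : ℕ) (hV : Module.finrank F V = n) (W : Submodule F V) (hW : Module.finrank F W = k)
    (S : Finset V) (μ : ℝ) (hμ : μ * (Fintype.card F : ℝ) ^ n = S.card * (Fintype.card F : ℝ) ^ k) :
    ∑ v : V, (((S.filter (fun x => x - v ∈ W)).card : ℝ) - μ) ^ 2 =
      (Fintype.card F : ℝ) ^ k *
        ((∑ x ∈ S, ∑ y ∈ S, if x - y ∈ W then (1 : ℝ) else 0) - μ * S.card) := by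
  have hcW : (Finset.univ.filter (fun w : V => w ∈ W)).card = Fintype.card F ^ k := by
    rw [← hW, ← Module.card_eq_pow_finrank (K := F) (V := W), Fintype.card_subtype]
  have hc : ∀ x : V, ∑ v : V, (if x - v ∈ W then (1 : ℝ) else 0) = (Fintype.card F : ℝ) ^ k := by
    intro x
    rw [Fintype.sum_equiv (Equiv.subLeft x) (fun v => if x - v ∈ W then (1 : ℝ) else 0)
      (fun v => if v ∈ W then (1 : ℝ) else 0) (fun v => by simp)]
    rw [Finset.sum_boole, hcW]; push_cast; rfl
  have e1 : ∑ v : V, ((S.filter (fun x => x - v ∈ W)).card : ℝ) =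
      S.card * (Fintype.card F : ℝ) ^ k := by
    simp_rw [← Finset.sum_boole]
    rw [Finset.sum_comm, Finset.sum_congr rfl (fun x _ => hc x)]; simp
  have e2 : ∑ v : V, ((S.filter (fun x => x - v ∈ W)).card : ℝ) ^ 2 =
      (Fintype.card F : ℝ) ^ k * (∑ x ∈ S, ∑ y ∈ S, if x - y ∈ W then (1 : ℝ) else 0) := by
    simp_rw [← Finset.sum_boole, sq, Finset.sum_mul_sum]
    rw [Finset.sum_comm, Finset.mul_sum]
    apply Finset.sum_congr rfl
    intro x _
    rw [Finset.sum_comm, Finset.mul_sum]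
    apply Finset.sum_congr rfl
    intro y _
    by_cases h : x - y ∈ W
    · rw [if_pos h, mul_one, ← hc x]
      apply Finset.sum_congr rfl
      intro v _
      have : (y - v ∈ W) ↔ (x - v ∈ W) := by
        rw [← W.add_mem_iff_right h (y := y - v)]; simp
      simp only [this]; split_ifs <;> simp
    · rw [if_neg h, mul_zero]
      apply Finset.sum_eq_zero
      intro v _
      by_cases h1 : x - v ∈ W
      · have : ¬ (y - v ∈ W) := fun h2 => h (by simpa using W.sub_mem h1 h2)
        simp [this]
      · simp [h1]
  have e3 : (Fintype.card V : ℝ) = (Fintype.card F : ℝ) ^ n := by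
    rw [Module.card_eq_pow_finrank (K := F) (V := V), hV]; push_cast; rfl
  simp_rw [sub_sq]
  rw [Finset.sum_add_distrib, Finset.sum_sub_distrib, e2, ← Finset.sum_mul, ← Finset.mul_sum, e1]
  simp only [Finset.sum_const, Finset.card_univ, nsmul_eq_mul, e3]
  linear_combination μ * hμ

open Classical in
theorem var_all {F V : Type*} [Field F] [Fintype F] [AddCommGroup V] [Module F V] [Fintype V]
    (n k : ℕ) (hV : Module.finrank F V = n)
    (G : Finset (Submodule F V)) (hG : ∀ W, W ∈ G ↔ Module.finrank F W = k)
    (S : Finset V) (μ : ℝ) (hμ : μ * (Fintype.card F : ℝ) ^ n = S.card * (Fintype.card F : ℝ) ^ k) :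
    ∑ W ∈ G, ∑ v : V, (((S.filter (fun x => x - v ∈ W)).card : ℝ) - μ) ^ 2 ≤
      (Fintype.card F : ℝ) ^ k * (G.card * S.card) := by
  have hq : (0 : ℝ) < Fintype.card F := by exact_mod_cast Fintype.card_pos
  rw [Finset.sum_congr rfl (fun W hW => var_one n k hV W ((hG W).1 hW) S μ hμ), ← Finset.mul_sum]
  apply mul_le_mul_of_nonneg_left _ (by positivity)
  rw [Finset.sum_sub_distrib, Finset.sum_comm]
  simp only [Finset.sum_const, nsmul_eq_mul]
  have hb : ∀ x ∈ S, ∑ W ∈ G, ∑ y ∈ S, (if x - y ∈ W then (1 : ℝ) else 0) ≤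
      G.card + G.card * μ := by
    intro x hx
    rw [Finset.sum_comm]
    have hpt : ∀ y ∈ S, ∑ W ∈ G, (if x - y ∈ W then (1 : ℝ) else 0) ≤
        (if x = y then (G.card : ℝ) else 0) +
          G.card * ((Fintype.card F : ℝ) ^ k / (Fintype.card F : ℝ) ^ n) := by
      intro y _
      rw [Finset.sum_boole]
      split_ifs with h
      · have : ((G.filter (fun W => x - y ∈ W)).card : ℝ) ≤ G.card := by
          exact_mod_cast Finset.card_filter_le _ _
        have : 0 ≤ (G.card : ℝ) * ((Fintype.card F : ℝ) ^ k / (Fintype.card F : ℝ) ^ n) := by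
          positivity
        linarith
      · rw [zero_add, ← mul_div_assoc, le_div_iff₀ (by positivity)]
        exact grass_pair n k hV G hG (x - y) (sub_ne_zero.2 h)
    refine (Finset.sum_le_sum hpt).trans (le_of_eq ?_)
    rw [Finset.sum_add_distrib, Finset.sum_ite_eq, if_pos hx]
    simp only [Finset.sum_const, nsmul_eq_mul]
    have : μ = S.card * ((Fintype.card F : ℝ) ^ k / (Fintype.card F : ℝ) ^ n) := by
      rw [← mul_div_assoc, eq_div_iff (by positivity), hμ]
    rw [this]; ring
  have := Finset.sum_le_sum hb
  simp only [Finset.sum_const, nsmul_eq_mul] at this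
  linarith

open Classical in
theorem var_L {F V : Type*} [Field F] [Fintype F] [AddCommGroup V] [Module F V] [Fintype V]
    (n k : ℕ) (hV : Module.finrank F V = n)
    (G : Finset (Submodule F V)) (hG : ∀ W, W ∈ G ↔ Module.finrank F W = k)
    (S : Finset V) (μ : ℝ) (hμ : μ * (Fintype.card F : ℝ) ^ n = S.card * (Fintype.card F : ℝ) ^ k)
    (L : Finset (Set V))
    (hflat : ∀ ℓ ∈ L, ∃ (W : Submodule F V) (v : V),
      Module.finrank F W = k ∧ ℓ = (fun x => v + x) '' (W : Set V)) :
    ∑ ℓ ∈ L, (((S.filter (fun p => p ∈ ℓ)).card : ℝ) - μ) ^ 2 ≤ G.card * S.card := by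
  have hq : (0 : ℝ) < Fintype.card F := by exact_mod_cast Fintype.card_pos
  have hmem : ∀ (W : Submodule F V) (v x : V), x ∈ (fun x => v + x) '' (W : Set V) ↔ x - v ∈ W := by
    intro W v x
    constructor
    · rintro ⟨y, hy, rfl⟩; simpa using hy
    · intro h; exact ⟨x - v, h, by simp⟩
  refine le_of_mul_le_mul_left ?_ (pow_pos hq k)
  refine le_trans ?_ (var_all n k hV G hG S μ hμ)
  rw [← Finset.sum_product' G Finset.univ
    (fun W v => (((S.filter (fun x => x - v ∈ W)).card : ℝ) - μ) ^ 2)]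
  let fl : Submodule F V × V → Set V := fun p => (fun x => p.2 + x) '' (p.1 : Set V)
  have hs : ∑ p ∈ G ×ˢ Finset.univ with fl p ∈ L,
      (((S.filter (fun x => x - p.2 ∈ p.1)).card : ℝ) - μ) ^ 2 ≤
      ∑ p ∈ G ×ˢ (Finset.univ : Finset V),
        (((S.filter (fun x => x - p.2 ∈ p.1)).card : ℝ) - μ) ^ 2 :=
    Finset.sum_le_sum_of_subset_of_nonneg (Finset.filter_subset _ _) (fun _ _ _ => sq_nonneg _)
  refine le_trans ?_ hs
  rw [← Finset.sum_fiberwise_of_maps_to (t := L) (g := fl)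
    (fun p hp => (Finset.mem_filter.1 hp).2), Finset.mul_sum]
  apply Finset.sum_le_sum
  intro ℓ hℓ
  obtain ⟨W, v, hW, hWv⟩ := hflat ℓ hℓ
  have hval : ∀ p ∈ ((G ×ˢ (Finset.univ : Finset V)).filter (fun p => fl p ∈ L)).filter
      (fun p => fl p = ℓ), (((S.filter (fun x => x - p.2 ∈ p.1)).card : ℝ) - μ) ^ 2 =
      (((S.filter (fun p => p ∈ ℓ)).card : ℝ) - μ) ^ 2 := by
    intro p hp
    have h := (Finset.mem_filter.1 hp).2
    have : S.filter (fun x => x - p.2 ∈ p.1) = S.filter (fun p => p ∈ ℓ) := by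
      apply Finset.filter_congr
      intro x _
      rw [← h]; exact (hmem p.1 p.2 x).symm
    rw [this]
  rw [Finset.sum_congr rfl hval, Finset.sum_const, nsmul_eq_mul]
  apply mul_le_mul_of_nonneg_right _ (sq_nonneg _)
  have hcW : (Finset.univ.filter (fun w : V => w ∈ W)).card = Fintype.card F ^ k := by
    rw [← hW, ← Module.card_eq_pow_finrank (K := F) (V := W), Fintype.card_subtype]
  have : Fintype.card F ^ k ≤ (((G ×ˢ (Finset.univ : Finset V)).filter (fun p => fl p ∈ L)).filter
      (fun p => fl p = ℓ)).card := by
    rw [← hcW]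
    apply Finset.card_le_card_of_injOn (fun w => (W, v + w))
    · intro w hw
      have hw : w ∈ W := by simpa using hw
      have hfl : fl (W, v + w) = ℓ := by
        rw [hWv]
        ext x
        refine (hmem W (v + w) x).trans (Iff.trans ?_ (hmem W v x).symm)
        rw [← sub_sub]
        exact W.sub_mem_iff_left hw
      simp only [Finset.coe_filter, Finset.mem_filter, Finset.mem_product, Finset.mem_univ,
        Set.mem_ofPred_eq, and_true]
      exact ⟨⟨(hG W).2 hW, by rw [hfl]; exact hℓ⟩, hfl⟩
    · intro a _ b _ h
      simpa using h
  exact_mod_cast this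

open Classical in
/-- For `n/2 < k < n` and `q^{n−k} < m ≤ q^k`: if `L` is a set of `C(n,k)_q` distinct
`k`-flats, each containing at least `m` points of `S ⊆ F_q^n`, then
`|S| ≥ (1 − q^{n−2k} − √(q^{n−k}/m))·m·q^{n−k}`. -/
theorem pure_incidences {F : Type*} [Field F] [Fintype F] (q n k m : ℕ)
    (hq : Fintype.card F = q) (hkn : k < n) (h2k : n < 2 * k)
    (hm1 : q ^ (n - k) < m) (hm2 : m ≤ q ^ k)
    (S : Finset (Fin n → F)) (L : Finset (Set (Fin n → F)))
    (hflat : ∀ ℓ ∈ L, ∃ (W : Submodule F (Fin n → F)) (v : Fin n → F),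
      Module.finrank F W = k ∧ ℓ = (fun x => v + x) '' (W : Set (Fin n → F)))
    (hrich : ∀ ℓ ∈ L, m ≤ (S.filter (fun p => p ∈ ℓ)).card)
    (hL : (L.card : ℝ) = qBinom q n k) :
    (1 - (q : ℝ) ^ ((n : ℤ) - 2 * k) - Real.sqrt ((q : ℝ) ^ (n - k) / m)) *
        m * (q : ℝ) ^ (n - k) ≤ S.card := by
  have hq1 : 1 < q := hq ▸ Fintype.one_lt_card
  have hV : Module.finrank F (Fin n → F) = n := by simp
  have : Fintype (Submodule F (Fin n → F)) := Fintype.ofFinite _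
  let G : Finset (Submodule F (Fin n → F)) := Finset.univ.filter (fun W => Module.finrank F W = k)
  have hG : ∀ W, W ∈ G ↔ Module.finrank F W = k := by intro W; simp [G]
  have hr := grass_card_le n k hkn.le hV G hG
  have hq0 : (0 : ℝ) < q := by exact_mod_cast (by omega : 0 < q)
  set a : ℝ := (q : ℝ) ^ (n - k) with ha
  have ha0 : 0 < a := by positivity
  have hm0 : (0 : ℝ) < m := by exact_mod_cast (by omega : 0 < m)
  set s : ℝ := (S.card : ℝ) with hs
  have hs0 : 0 ≤ s := by positivity
  have hqn : (q : ℝ) ^ n = a * (q : ℝ) ^ k := by rw [ha, ← pow_add]; congr 1; omega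
  have hv := var_L n k hV G hG S (s / a) (by rw [hq, hqn, ← hs]; field_simp) L hflat
  rw [hq, ← hL] at hr
  have hz : (0 : ℝ) ≤ (q : ℝ) ^ ((n : ℤ) - 2 * k) := by positivity
  -- main inequality
  have hmain : (1 - Real.sqrt (a / m)) * m * a ≤ s := by
    by_cases hbig : m * a ≤ s
    · have : 0 ≤ Real.sqrt (a / m) * m * a := by positivity
      linarith
    push Not at hbig
    have hμm : s / a < m := by rw [div_lt_iff₀ ha0]; exact hbig
    have hLpos : (0 : ℝ) < L.card := by
      rw [hL, qBinom]
      apply Finset.prod_pos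
      intro i hi
      have hi' := Finset.mem_range.1 hi
      have hq1' : (1 : ℝ) < q := by exact_mod_cast hq1
      have h1 := one_lt_pow₀ hq1' (n := k - i) (by omega)
      have h2 := one_lt_pow₀ hq1' (n := n - i) (by omega)
      exact div_pos (by linarith) (by linarith)
    have hlow : (L.card : ℝ) * (m - s / a) ^ 2 ≤
        ∑ ℓ ∈ L, (((S.filter (fun p => p ∈ ℓ)).card : ℝ) - s / a) ^ 2 := by
      rw [← nsmul_eq_mul]
      apply Finset.card_nsmul_le_sum
      intro ℓ hℓ
      have : (m : ℝ) ≤ ((S.filter (fun p => p ∈ ℓ)).card : ℝ) := by exact_mod_cast hrich ℓ hℓ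
      apply pow_le_pow_left₀ <;> linarith
    have h1 : (m - s / a) ^ 2 ≤ s := by
      refine le_of_mul_le_mul_left ?_ hLpos
      exact (hlow.trans hv).trans (mul_le_mul_of_nonneg_right hr hs0)
    have h2 : m - s / a ≤ Real.sqrt (a / m) * m := by
      have : (m - s / a) ≤ Real.sqrt (m * a) := Real.le_sqrt_of_sq_le (h1.trans hbig.le)
      refine this.trans (Real.sqrt_le_iff.2 ⟨by positivity, le_of_eq ?_⟩)
      rw [mul_pow, Real.sq_sqrt (by positivity)]
      field_simp
    have h3 : (1 - Real.sqrt (a / m)) * m ≤ s / a := by linarith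
    exact (le_div_iff₀ ha0).1 h3
  have : 0 ≤ (q : ℝ) ^ ((n : ℤ) - 2 * k) * m * a := by positivity
  linarith
end
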